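/- arXiv:2101.06183 — 5 statements merged into one kernel-verified Lean document; each statement's English description precedes it below -/
import Mathlib

section
/- Under Conditions (B1), (B2) and (B3), the family of random variables {N(t)/v(δ(t)) : t > 0} satisfies the large deviation principle with speed v(δ(t)) and good rate function Λ*, i.e. Λ* is lower semicontinuous with compact level sets, limsup_{t→∞} (1/v(δ(t))) log P(N(t)/v(δ(t)) ∈ C) ≤ −inf_{x∈C} Λ*(x) for every closed set C ⊆ ℝ, and liminf_{t→∞} (1/v(δ(t))) log P(N(t)/v(δ(t)) ∈ O) ≥ −inf_{x∈O} Λ*(x) for every open set O ⊆ ℝ. -/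
open Filter Topology

/-- Series function `D_j(x) = ∑_{k≥0} d_{k,j} x^k`. -/
noncomputable def Dser (d : ℕ → ℕ → ℝ) (j : ℕ) (x : ℝ) : ℝ := ∑' k : ℕ, d k j * x ^ k

/-- Normalizing constant `∑_{j≥0} d_{j,j} (δ_j(t))^j / D_j(δ_j(t))`. -/
noncomputable def Znorm (d : ℕ → ℕ → ℝ) (δf : ℕ → ℝ → ℝ) (t : ℝ) : ℝ :=
  ∑' j : ℕ, d j j * (δf j t) ^ j / Dser d j (δf j t)

/-- `P(N(t)=k)`. -/
noncomputable def pmfN (d : ℕ → ℕ → ℝ) (δf : ℕ → ℝ → ℝ) (t : ℝ) (k : ℕ) : ℝ :=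
  (d k k * (δf k t) ^ k / Dser d k (δf k t)) / Znorm d δf t

/-- `E[N(t)]`. -/
noncomputable def meanN (d : ℕ → ℕ → ℝ) (δf : ℕ → ℝ → ℝ) (t : ℝ) : ℝ :=
  ∑' k : ℕ, (k : ℝ) * pmfN d δf t k

/-- `Λ(θ) = Δ(e^θ) - Δ(1)`. -/
noncomputable def Lam (Δ : ℝ → ℝ) (θ : ℝ) : ℝ := Δ (Real.exp θ) - Δ 1

/-- The remainder `R_n(u,t)` (an empty sum when `n = 0`). -/
noncomputable def Rfun (n : ℕ) (d : ℕ → ℕ → ℝ) (δf : ℕ → ℝ → ℝ) (u t : ℝ) : ℝ :=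
  ∑ k ∈ Finset.range n, (d k k * (u * δf k t) ^ k / Dser d k (δf k t)
    - d k n * (u * δf n t) ^ k / Dser d n (δf n t))

/-- Conditions (B1), (B2), (B3), together with the standing assumptions on the model:
nonnegative coefficients, convergent and positive series functions, positive and divergent
functions `δ_j`. For `j ≥ n` one has `d_{k,j} = d_{k,n} =: d_k` and `δ_j = δ_n =: δ`. -/
structure PSCond (n : ℕ) (d : ℕ → ℕ → ℝ) (δf : ℕ → ℝ → ℝ) (v Δ : ℝ → ℝ) : Prop where
  d_nonneg : ∀ k j : ℕ, 0 ≤ d k j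
  D_summable : ∀ j : ℕ, ∀ x : ℝ, 0 < x → Summable (fun k : ℕ => d k j * x ^ k)
  D_pos : ∀ j : ℕ, ∀ x : ℝ, 0 < x → 0 < Dser d j x
  delta_pos : ∀ j : ℕ, ∀ t : ℝ, 0 < t → 0 < δf j t
  delta_tendsto : ∀ j : ℕ, Tendsto (δf j) atTop atTop
  B1_d : ∀ j : ℕ, n ≤ j → ∀ k : ℕ, d k j = d k n
  B1_delta : ∀ j : ℕ, n ≤ j → δf j = δf n
  v_pos : ∀ t : ℝ, 0 < t → 0 < v t
  v_tendsto : Tendsto v atTop atTop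
  Delta_diff : ∀ u : ℝ, 0 < u → DifferentiableAt ℝ Δ u
  B1_lim : ∀ u : ℝ, 0 < u →
    Tendsto (fun t : ℝ => (v t)⁻¹ * Real.log (Dser d n (u * t))) atTop (𝓝 (Δ u))
  B2 : ∀ m : ℕ, ∃ k : ℕ, m ≤ k ∧ 0 < d k k
  B3_lim : ∀ k : ℕ, k < n → 0 < d k n →
    Tendsto (fun t : ℝ => (d k k * (δf k t) ^ k / Dser d k (δf k t)) /
      (d k n * (δf n t) ^ k / Dser d n (δf n t))) atTop (𝓝 0)
  B3_zero : ∀ k : ℕ, k < n → d k n = 0 → d k k = 0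

/-- Extended-real logarithm: `elog 0 = ⊥`. -/
noncomputable def elog (x : ℝ) : EReal := if x ≤ 0 then ⊥ else ((Real.log x : ℝ) : EReal)

/-- The Legendre transform `Λ*(x) = sup_θ (θ x - Λ(θ))`, as an extended real number. -/
noncomputable def LamStar (Δ : ℝ → ℝ) (x : ℝ) : EReal :=
  ⨆ θ : ℝ, ((θ * x - Lam Δ θ : ℝ) : EReal)

/-- `P(N(t)/v(δ(t)) ∈ S)`. -/
noncomputable def probScaled (n : ℕ) (d : ℕ → ℕ → ℝ) (δf : ℕ → ℝ → ℝ) (v : ℝ → ℝ)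
    (t : ℝ) (S : Set ℝ) : ℝ :=
  ∑' k : ℕ, S.indicator (fun _ => pmfN d δf t k) ((k : ℝ) / v (δf n t))

/-!
The weights with index at least `n` agree with those of the power series distribution
`d_k δ^k / D(δ)`, the finitely many others are eventually dominated by them, and by (B2) a finite
head of that series is negligible as `δ → ∞`. Hence `E[u^N(t)]` eventually lies within a factor `2`
of `D(u δ(t)) / D(δ(t))`, so by (B1) the scaled log-moment generating functions of
`N(t) / v(δ(t))` converge to `Λ`, which is finite and differentiable on the whole line. The
Gärtner–Ellis theorem applies: Chernoff's bound and compactness give the upper bound, and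
exponential tilting gives the lower bound at the slopes of `Λ`, which come arbitrarily close to
every point of the domain of `Λ*`.
-/

open MeasureTheory
open scoped ENNReal

section ExponentialRates

/-- The exponential rate `s⁻¹ log a` of a mass `a` at speed `s`. -/
noncomputable def scaledLog (s : ℝ) (a : ℝ≥0∞) : EReal := ((s⁻¹ : ℝ) : EReal) * ENNReal.log a

/-- The upper exponential rate `limsup s⁻¹ log a` of a family of masses, at speed `s`. -/
noncomputable def upperExpRate {ι : Type*} (l : Filter ι) (s : ι → ℝ) (a : ι → ℝ≥0∞) : EReal :=
  limsup (fun i => scaledLog (s i) (a i)) l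

/-- The lower exponential rate `liminf s⁻¹ log a` of a family of masses, at speed `s`. -/
noncomputable def lowerExpRate {ι : Type*} (l : Filter ι) (s : ι → ℝ) (a : ι → ℝ≥0∞) : EReal :=
  liminf (fun i => scaledLog (s i) (a i)) l

lemma scaledLog_ofReal_exp {s : ℝ} (hs : 0 < s) (b : ℝ) :
    scaledLog s (ENNReal.ofReal (Real.exp (s * b))) = b := by
  rw [scaledLog, ENNReal.log_ofReal_of_pos (Real.exp_pos _), Real.log_exp, ← EReal.coe_mul,
    inv_mul_cancel_left₀ hs.ne']

lemma scaledLog_strictMono {s : ℝ} (hs : 0 < s) : StrictMono (scaledLog s) := fun a b hab => by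
  simp only [scaledLog, EReal.coe_inv, ← EReal.div_eq_inv_mul]
  exact EReal.strictMono_div_right_of_pos (by exact_mod_cast hs) (EReal.coe_ne_top _)
    (ENNReal.log_lt_log hab)

lemma scaledLog_le_coe_iff {s : ℝ} (hs : 0 < s) {a : ℝ≥0∞} {b : ℝ} :
    scaledLog s a ≤ b ↔ a ≤ ENNReal.ofReal (Real.exp (s * b)) := by
  rw [← scaledLog_ofReal_exp hs b, (scaledLog_strictMono hs).le_iff_le]

lemma coe_le_scaledLog_iff {s : ℝ} (hs : 0 < s) {a : ℝ≥0∞} {b : ℝ} :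
    b ≤ scaledLog s a ↔ ENNReal.ofReal (Real.exp (s * b)) ≤ a := by
  rw [← scaledLog_ofReal_exp hs b, (scaledLog_strictMono hs).le_iff_le]

lemma ofReal_exp_mul_ofReal_exp (s b c : ℝ) :
    ENNReal.ofReal (Real.exp (s * b)) * ENNReal.ofReal (Real.exp (s * c)) =
      ENNReal.ofReal (Real.exp (s * (b + c))) := by
  rw [← ENNReal.ofReal_mul (Real.exp_pos _).le, ← Real.exp_add, mul_add]

variable {ι : Type*} {l : Filter ι} {s : ι → ℝ} {a b : ι → ℝ≥0∞}

lemma upperExpRate_le_iff (hs : Tendsto s l atTop) {c : EReal} :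
    upperExpRate l s a ≤ c ↔
      ∀ x : ℝ, c < x → ∀ᶠ i in l, a i ≤ ENNReal.ofReal (Real.exp (s i * x)) := by
  refine ⟨fun h x hx => ?_, fun h => EReal.le_of_forall_lt_iff_le.1 fun x hx => ?_⟩
  · filter_upwards [eventually_lt_of_limsup_lt (h.trans_lt hx), hs.eventually_gt_atTop 0]
      with i hi hsi using (scaledLog_le_coe_iff hsi).1 hi.le
  · refine limsup_le_of_le (by isBoundedDefault) ?_
    filter_upwards [h x hx, hs.eventually_gt_atTop 0] with i hi hsi
      using (scaledLog_le_coe_iff hsi).2 hi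

lemma le_lowerExpRate_iff (hs : Tendsto s l atTop) {c : EReal} :
    c ≤ lowerExpRate l s a ↔
      ∀ x : ℝ, (x : EReal) < c → ∀ᶠ i in l, ENNReal.ofReal (Real.exp (s i * x)) ≤ a i := by
  refine ⟨fun h x hx => ?_, fun h => EReal.ge_of_forall_gt_iff_ge.1 fun x hx => ?_⟩
  · filter_upwards [eventually_lt_of_lt_liminf (hx.trans_le h), hs.eventually_gt_atTop 0]
      with i hi hsi using (coe_le_scaledLog_iff hsi).1 hi.le
  · refine le_liminf_of_le (by isBoundedDefault) ?_
    filter_upwards [h x hx, hs.eventually_gt_atTop 0] with i hi hsi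
      using (coe_le_scaledLog_iff hsi).2 hi

lemma upperExpRate_mono (hs : Tendsto s l atTop) (h : ∀ᶠ i in l, a i ≤ b i) :
    upperExpRate l s a ≤ upperExpRate l s b :=
  limsup_le_limsup <| h.mp <| (hs.eventually_gt_atTop 0).mono fun i hsi hi =>
    (scaledLog_strictMono hsi).monotone hi

lemma lowerExpRate_mono (hs : Tendsto s l atTop) (h : ∀ᶠ i in l, a i ≤ b i) :
    lowerExpRate l s a ≤ lowerExpRate l s b :=
  liminf_le_liminf <| h.mp <| (hs.eventually_gt_atTop 0).mono fun i hsi hi =>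
    (scaledLog_strictMono hsi).monotone hi

lemma upperExpRate_exp_mul_le (hs : Tendsto s l atTop) {x y : ℝ} (h : upperExpRate l s a ≤ x) :
    upperExpRate l s (fun i => ENNReal.ofReal (Real.exp (s i * y)) * a i) ≤
      ((y + x : ℝ) : EReal) := by
  rw [upperExpRate_le_iff hs] at h ⊢
  intro z hz
  have hxz : x < z - y := by linarith [EReal.coe_lt_coe_iff.1 hz]
  filter_upwards [h (z - y) (by exact_mod_cast hxz)] with i hi
  calc ENNReal.ofReal (Real.exp (s i * y)) * a i
      ≤ ENNReal.ofReal (Real.exp (s i * y)) * ENNReal.ofReal (Real.exp (s i * (z - y))) := by gcongr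
    _ = ENNReal.ofReal (Real.exp (s i * z)) := by
      rw [ofReal_exp_mul_ofReal_exp, add_sub_cancel]

lemma le_lowerExpRate_exp_mul (hs : Tendsto s l atTop) {x y : ℝ} (h : x ≤ lowerExpRate l s a) :
    ((y + x : ℝ) : EReal) ≤
      lowerExpRate l s (fun i => ENNReal.ofReal (Real.exp (s i * y)) * a i) := by
  rw [le_lowerExpRate_iff hs] at h ⊢
  intro z hz
  have hzx : z - y < x := by linarith [EReal.coe_lt_coe_iff.1 hz]
  filter_upwards [h (z - y) (by exact_mod_cast hzx)] with i hi
  calc ENNReal.ofReal (Real.exp (s i * z))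
      = ENNReal.ofReal (Real.exp (s i * y)) * ENNReal.ofReal (Real.exp (s i * (z - y))) := by
        rw [ofReal_exp_mul_ofReal_exp, add_sub_cancel]
    _ ≤ ENNReal.ofReal (Real.exp (s i * y)) * a i := by gcongr

lemma eventually_two_mul_ofReal_exp_le (hs : Tendsto s l atTop) {x y : ℝ} (hxy : x < y) :
    ∀ᶠ i in l, 2 * ENNReal.ofReal (Real.exp (s i * x)) ≤ ENNReal.ofReal (Real.exp (s i * y)) := by
  have hexp : Tendsto (fun i => Real.exp (s i * (y - x))) l atTop :=
    Real.tendsto_exp_atTop.comp (hs.atTop_mul_const (sub_pos.2 hxy))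
  filter_upwards [hexp.eventually_ge_atTop 2] with i hi
  calc 2 * ENNReal.ofReal (Real.exp (s i * x))
      ≤ ENNReal.ofReal (Real.exp (s i * (y - x))) * ENNReal.ofReal (Real.exp (s i * x)) := by
        gcongr
        simpa using ENNReal.ofReal_le_ofReal hi
    _ = ENNReal.ofReal (Real.exp (s i * y)) := by
      rw [ofReal_exp_mul_ofReal_exp, sub_add_cancel]

lemma upperExpRate_add_le (hs : Tendsto s l atTop) {c : EReal} (ha : upperExpRate l s a ≤ c)
    (hb : upperExpRate l s b ≤ c) : upperExpRate l s (fun i => a i + b i) ≤ c := by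
  rw [upperExpRate_le_iff hs] at ha hb ⊢
  intro x hx
  obtain ⟨y, hcy, hyx⟩ := EReal.lt_iff_exists_real_btwn.1 hx
  filter_upwards [ha y hcy, hb y hcy,
    eventually_two_mul_ofReal_exp_le hs (EReal.coe_lt_coe_iff.1 hyx)] with i hai hbi htwo
  exact (add_le_add hai hbi).trans (by rwa [← two_mul])

lemma upperExpRate_sum_le (hs : Tendsto s l atTop) {κ : Type*} {f : κ → ι → ℝ≥0∞} {c : EReal}
    (F : Finset κ) (hf : ∀ k ∈ F, upperExpRate l s (f k) ≤ c) :
    upperExpRate l s (fun i => ∑ k ∈ F, f k i) ≤ c := by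
  classical
  induction F using Finset.induction_on with
  | empty => exact (upperExpRate_le_iff hs).2 fun x _ => by simp
  | insert k F hk ih =>
    simp only [Finset.sum_insert hk]
    exact upperExpRate_add_le hs (hf k (Finset.mem_insert_self k F))
      (ih fun j hj => hf j (Finset.mem_insert_of_mem hj))

lemma le_lowerExpRate_of_add (hs : Tendsto s l atTop) {c : EReal}
    (hab : c ≤ lowerExpRate l s (fun i => a i + b i)) (hb : upperExpRate l s b < c) :
    c ≤ lowerExpRate l s a := by
  rw [le_lowerExpRate_iff hs] at hab ⊢
  intro x hx
  obtain ⟨y, hy, hyc⟩ := EReal.lt_iff_exists_real_btwn.1 (max_lt hx hb)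
  obtain ⟨z, hyz, hzc⟩ := EReal.lt_iff_exists_real_btwn.1 hyc
  have hxy : x ≤ y := EReal.coe_le_coe_iff.1 ((le_max_left _ _).trans hy.le)
  have hby := (upperExpRate_le_iff hs).1 le_rfl y ((le_max_right _ _).trans_lt hy)
  filter_upwards [hab z hzc, hby, hs.eventually_gt_atTop 0,
    eventually_two_mul_ofReal_exp_le hs (EReal.coe_lt_coe_iff.1 hyz)] with i habi hbi hsi htwo
  have hya : ENNReal.ofReal (Real.exp (s i * y)) ≤ a i := by
    refine (ENNReal.add_le_add_iff_right (a := ENNReal.ofReal (Real.exp (s i * y)))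
      ENNReal.ofReal_ne_top).1 ?_
    calc _ = 2 * ENNReal.ofReal (Real.exp (s i * y)) := (two_mul _).symm
      _ ≤ a i + b i := htwo.trans habi
      _ ≤ a i + ENNReal.ofReal (Real.exp (s i * y)) := by gcongr
  exact le_trans (by gcongr) hya

end ExponentialRates

section LegendreTransform

/-- The Legendre transform `L*(x) = sup_θ (θ x - L θ)` of a real function. -/
noncomputable def legendreTransform (L : ℝ → ℝ) (x : ℝ) : EReal :=
  ⨆ θ : ℝ, ((θ * x - L θ : ℝ) : EReal)

variable {L : ℝ → ℝ}

lemma legendreTransform_le_coe_iff {x m : ℝ} :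
    legendreTransform L x ≤ m ↔ ∀ θ, θ * x - L θ ≤ m := by
  simp only [legendreTransform, iSup_le_iff, EReal.coe_le_coe_iff]

lemma coe_lt_legendreTransform_iff {x m : ℝ} :
    m < legendreTransform L x ↔ ∃ θ, m < θ * x - L θ := by
  simp only [legendreTransform, lt_iSup_iff, EReal.coe_lt_coe_iff]

lemma lowerSemicontinuous_legendreTransform : LowerSemicontinuous (legendreTransform L) :=
  lowerSemicontinuous_iSup fun _ =>
    (continuous_coe_real_ereal.comp (by fun_prop)).lowerSemicontinuous

lemma legendreTransform_sublevel_subset_Icc (m : ℝ) :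
    {x | legendreTransform L x ≤ m} ⊆ Set.Icc (-(m + L (-1))) (m + L 1) := fun x hx => by
  have hx := legendreTransform_le_coe_iff.1 hx
  constructor <;> linarith [hx 1, hx (-1)]

lemma isCompact_legendreTransform_sublevel (m : ℝ) :
    IsCompact {x | legendreTransform L x ≤ m} :=
  isCompact_Icc.of_isClosed_subset
    (lowerSemicontinuous_legendreTransform.isClosed_preimage (m : EReal))
    (legendreTransform_sublevel_subset_Icc m)

lemma exists_finset_of_lt_legendreTransform {C : Set ℝ} (hC : IsClosed C) {m : ℝ}
    (h : ∀ x ∈ C, m < legendreTransform L x) :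
    ∃ F : Finset ℝ, ∀ x ∈ C, ∃ θ ∈ F, m < θ * x - L θ := by
  classical
  have hK : IsCompact (C ∩ Set.Icc (-(m + L (-1))) (m + L 1)) := isCompact_Icc.inter_left hC
  obtain ⟨F, hF⟩ := hK.elim_finite_subcover (fun θ : ℝ => {x : ℝ | m < θ * x - L θ})
    (fun θ => isOpen_lt continuous_const (by fun_prop))
    (fun x hx => Set.mem_iUnion.2 (coe_lt_legendreTransform_iff.1 (h x hx.1)))
  -- The slopes `±1` cover everything outside the compact interval.
  refine ⟨insert 1 (insert (-1) F), fun x hx => ?_⟩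
  rcases lt_or_ge (m + L 1) x with hright | hright
  · exact ⟨1, by simp, by linarith⟩
  rcases lt_or_ge x (-(m + L (-1))) with hleft | hleft
  · exact ⟨-1, by simp, by linarith⟩
  obtain ⟨θ, hθ, hlt⟩ := Set.mem_iUnion₂.1 (hF ⟨hx, hleft, hright⟩)
  exact ⟨θ, by simp [hθ], hlt⟩

lemma exists_forall_add_mul_norm_sq_le {E : Type*} [NormedAddCommGroup E] [ProperSpace E]
    {g : E → ℝ} (hg : Continuous g) {m ε : ℝ} (hm : ∀ x, m ≤ g x) (hε : 0 < ε) :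
    ∃ x, ∀ y, g x + ε * ‖x‖ ^ 2 ≤ g y + ε * ‖y‖ ^ 2 := by
  have hcoercive : Tendsto (fun x : E => m + ε * ‖x‖ ^ 2) (cocompact E) atTop :=
    tendsto_atTop_add_const_left _ _ <|
      ((tendsto_pow_atTop two_ne_zero).comp tendsto_norm_cocompact_atTop).const_mul_atTop hε
  exact Continuous.exists_forall_le (by fun_prop)
    (tendsto_atTop_mono (fun x => by gcongr; exact hm x) hcoercive)

/-- Points with finite Legendre transform need not be slopes of `L`; minimizing the penalized
function `L θ - θ x + ε θ²` yields a nearby slope without increasing the transform. -/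
lemma exists_deriv_mem_of_legendreTransform_le (hL : Differentiable ℝ L) {x m : ℝ}
    (hx : legendreTransform L x ≤ m) {U : Set ℝ} (hU : U ∈ 𝓝 x) :
    ∃ θ, deriv L θ ∈ U ∧ θ * deriv L θ - L θ ≤ m := by
  rw [legendreTransform_le_coe_iff] at hx
  obtain ⟨r, hr, hrU⟩ := Metric.mem_nhds_iff.1 hU
  have hm : 0 ≤ m + L 0 := by linarith [hx 0]
  set ε := r ^ 2 / (4 * (m + L 0 + 1)) with hε_def
  have hε : 0 < ε := by positivity
  obtain ⟨θ, hmin⟩ := exists_forall_add_mul_norm_sq_le (g := fun θ => L θ - θ * x) (m := -m)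
    (by have := hL.continuous; fun_prop) (fun θ => by linarith [hx θ]) hε
  simp only [Real.norm_eq_abs, sq_abs] at hmin
  have hpenalty : ε * θ ^ 2 ≤ m + L 0 := by linarith [hmin 0, hx θ]
  have hslope : deriv L θ = x - 2 * ε * θ := by
    have hderiv : HasDerivAt (fun θ => L θ - θ * x + ε * θ ^ 2)
        (deriv L θ - 1 * x + ε * (↑2 * θ ^ (2 - 1) * 1)) θ :=
      ((hL θ).hasDerivAt.sub ((hasDerivAt_id θ).mul_const x)).add
        (((hasDerivAt_id θ).pow 2).const_mul ε)
    have hzero := IsLocalMin.hasDerivAt_eq_zero (Eventually.of_forall hmin) hderiv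
    norm_num at hzero
    linarith
  refine ⟨θ, hrU ?_, ?_⟩
  · rw [Metric.mem_ball, Real.dist_eq]
    refine abs_lt_of_sq_lt_sq ?_ hr.le
    calc (deriv L θ - x) ^ 2 = 4 * ε * (ε * θ ^ 2) := by rw [hslope]; ring
      _ ≤ 4 * ε * (m + L 0) := by gcongr
      _ < 4 * ε * (m + L 0 + 1) := mul_lt_mul_of_pos_left (lt_add_one _) (by positivity)
      _ = r ^ 2 := by rw [hε_def]; field_simp
  · calc θ * deriv L θ - L θ = (θ * x - L θ) - 2 * (ε * θ ^ 2) := by rw [hslope]; ring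
      _ ≤ θ * x - L θ := sub_le_self _ (by positivity)
      _ ≤ m := hx θ

end LegendreTransform

section GartnerEllis

/-- The large deviation principle for the family `μ` along `l`, with speed `s` and good rate
function `I`. The masses `μ i` are not required to be normalized. -/
structure LargeDeviationPrinciple {ι X : Type*} [TopologicalSpace X] [MeasurableSpace X]
    (l : Filter ι) (s : ι → ℝ) (μ : ι → Measure X) (I : X → EReal) : Prop where
  lowerSemicontinuous : LowerSemicontinuous I
  isCompact_sublevel : ∀ m : ℝ, IsCompact {x | I x ≤ m}
  upperExpRate_le : ∀ C, IsClosed C → upperExpRate l s (fun i => μ i C) ≤ -⨅ x ∈ C, I x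
  le_lowerExpRate : ∀ O, IsOpen O → -⨅ x ∈ O, I x ≤ lowerExpRate l s (fun i => μ i O)

/-- The exponential moment `∫ e^{θ x} dμ(x)`, infinite when it diverges. -/
noncomputable def expMoment (μ : Measure ℝ) (θ : ℝ) : ℝ≥0∞ :=
  ∫⁻ x, ENNReal.ofReal (Real.exp (θ * x)) ∂μ

/-- The scaled log-moment generating functions `s⁻¹ log ∫ e^{s θ x} dμ(x)` converge to `L θ`. -/
def TendstoScaledCGF {ι : Type*} (l : Filter ι) (s : ι → ℝ) (μ : ι → Measure ℝ) (L : ℝ → ℝ) :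
    Prop :=
  ∀ θ, Tendsto (fun i => scaledLog (s i) (expMoment (μ i) (s i * θ))) l (𝓝 (L θ))

/-- The exponential tilt `e^{θ x} dμ(x)`, without normalization. -/
noncomputable def expTilt (μ : Measure ℝ) (θ : ℝ) : Measure ℝ :=
  μ.withDensity fun x => ENNReal.ofReal (Real.exp (θ * x))

lemma expMoment_expTilt (μ : Measure ℝ) (θ η : ℝ) :
    expMoment (expTilt μ θ) η = expMoment μ (θ + η) := by
  rw [expMoment, expTilt, lintegral_withDensity_eq_lintegral_mul _ (by fun_prop) (by fun_prop)]
  refine lintegral_congr fun x => ?_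
  rw [Pi.mul_apply, ← ENNReal.ofReal_mul (Real.exp_pos _).le, ← Real.exp_add, add_mul]

lemma expTilt_univ (μ : Measure ℝ) (θ : ℝ) : expTilt μ θ Set.univ = expMoment μ θ := by
  rw [expTilt, withDensity_apply _ MeasurableSet.univ, setLIntegral_univ, expMoment]

lemma expTilt_apply_le {μ : Measure ℝ} {θ c : ℝ} {S : Set ℝ} (hS : MeasurableSet S)
    (hc : ∀ x ∈ S, θ * x ≤ c) : expTilt μ θ S ≤ ENNReal.ofReal (Real.exp c) * μ S := by
  rw [expTilt, withDensity_apply _ hS, ← setLIntegral_const]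
  refine setLIntegral_mono' hS fun x hx => ?_
  gcongr
  exact hc x hx

lemma measure_le_exp_mul_expMoment (μ : Measure ℝ) (θ c : ℝ) :
    μ {x | c ≤ θ * x} ≤ ENNReal.ofReal (Real.exp (-c)) * expMoment μ θ := by
  have hmarkov := mul_meas_ge_le_lintegral (μ := μ)
    (f := fun x => ENNReal.ofReal (Real.exp (θ * x))) (by fun_prop) (ENNReal.ofReal (Real.exp c))
  simp only [ENNReal.ofReal_le_ofReal_iff (Real.exp_pos _).le, Real.exp_le_exp] at hmarkov
  calc μ {x | c ≤ θ * x}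
      = ENNReal.ofReal (Real.exp (-c)) * (ENNReal.ofReal (Real.exp c) * μ {x | c ≤ θ * x}) := by
        rw [← mul_assoc, ← ENNReal.ofReal_mul (Real.exp_pos _).le, ← Real.exp_add, neg_add_cancel,
          Real.exp_zero, ENNReal.ofReal_one, one_mul]
    _ ≤ ENNReal.ofReal (Real.exp (-c)) * expMoment μ θ := by gcongr; exact hmarkov

variable {ι : Type*} {l : Filter ι} {s : ι → ℝ} {μ : ι → Measure ℝ} {L : ℝ → ℝ}

namespace TendstoScaledCGF

lemma tilted (h : TendstoScaledCGF l s μ L) (θ : ℝ) :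
    TendstoScaledCGF l s (fun i => expTilt (μ i) (s i * θ)) (fun η => L (θ + η)) := fun η => by
  simpa only [expMoment_expTilt, mul_add] using h (θ + η)

variable [l.NeBot]

lemma upperExpRate_halfspace_le (h : TendstoScaledCGF l s μ L) (hs : Tendsto s l atTop)
    (θ c : ℝ) : upperExpRate l s (fun i => μ i {x | c ≤ θ * x}) ≤ ((L θ - c : ℝ) : EReal) := by
  have hchernoff : ∀ᶠ i in l, μ i {x | c ≤ θ * x} ≤
      ENNReal.ofReal (Real.exp (s i * -c)) * expMoment (μ i) (s i * θ) := by
    filter_upwards [hs.eventually_gt_atTop 0] with i hsi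
    have hset : {x | c ≤ θ * x} = {x | s i * c ≤ s i * θ * x} := by
      simp only [mul_assoc, mul_le_mul_iff_right₀ hsi]
    rw [hset, mul_neg]
    exact measure_le_exp_mul_expMoment _ _ _
  rw [sub_eq_neg_add]
  exact (upperExpRate_mono hs hchernoff).trans (upperExpRate_exp_mul_le hs (h θ).limsup_eq.le)

lemma upperExpRate_isClosed_le (h : TendstoScaledCGF l s μ L) (hs : Tendsto s l atTop)
    {C : Set ℝ} (hC : IsClosed C) :
    upperExpRate l s (fun i => μ i C) ≤ -⨅ x ∈ C, legendreTransform L x := by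
  rw [EReal.le_neg, ← EReal.ge_of_forall_gt_iff_ge]
  intro c hc
  rw [EReal.le_neg]
  obtain ⟨F, hF⟩ := exists_finset_of_lt_legendreTransform hC fun x hx =>
    hc.trans_le (iInf₂_le x hx)
  have hcover : ∀ i, μ i C ≤ ∑ θ ∈ F, μ i {x | c + L θ ≤ θ * x} := fun i => by
    refine (measure_mono fun x hx => ?_).trans (measure_biUnion_finset_le F _)
    obtain ⟨θ, hθ, hlt⟩ := hF x hx
    exact Set.mem_iUnion₂.2 ⟨θ, hθ, (lt_sub_iff_add_lt.1 hlt).le⟩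
  refine (upperExpRate_mono hs (.of_forall hcover)).trans (upperExpRate_sum_le hs F fun θ _ => ?_)
  simpa using h.upperExpRate_halfspace_le hs θ (c + L θ)

/-- Chernoff's bound with a small slope of either sign: `L η - η (y ± ρ) < L 0` for small `±η`. -/
lemma upperExpRate_compl_ball_lt (h : TendstoScaledCGF l s μ L) (hs : Tendsto s l atTop)
    {y ρ : ℝ} (hL : HasDerivAt L y 0) (hρ : 0 < ρ) :
    upperExpRate l s (fun i => μ i (Metric.ball y ρ)ᶜ) < L 0 := by
  have hsmall : ∀ᶠ η in 𝓝 (0 : ℝ), |L η - L 0 - η * y| ≤ ρ / 2 * |η| := by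
    simpa using (hasDerivAt_iff_isLittleO_nhds_zero.1 hL).def (half_pos hρ)
  obtain ⟨r, hr, hball⟩ := Metric.eventually_nhds_iff.1 hsmall
  set η := r / 2
  have hη : 0 < η := half_pos hr
  have hη_lt : |η| < r := by rw [abs_of_pos hη]; exact half_lt_self hr
  have hright := hball (y := η) (by simpa using hη_lt)
  have hleft := hball (y := -η) (by simpa using hη_lt)
  rw [abs_neg] at hleft
  rw [abs_of_pos hη, abs_le] at hright hleft
  have hcover : ∀ i, μ i (Metric.ball y ρ)ᶜ ≤
      μ i {x | η * (y + ρ) ≤ η * x} + μ i {x | -η * (y - ρ) ≤ -η * x} := fun i => by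
    refine (measure_mono fun x hx => ?_).trans (measure_union_le _ _)
    rw [Set.mem_compl_iff, Metric.mem_ball, Real.dist_eq, not_lt, le_abs] at hx
    exact hx.imp (fun hx => mul_le_mul_of_nonneg_left (by linarith) hη.le)
      (fun hx => mul_le_mul_of_nonpos_left (by linarith) (neg_nonpos.2 hη.le))
  have hrate : upperExpRate l s (fun i => μ i (Metric.ball y ρ)ᶜ) ≤
      ((L 0 - η * ρ / 2 : ℝ) : EReal) :=
    (upperExpRate_mono hs (.of_forall hcover)).trans <| upperExpRate_add_le hs
      ((h.upperExpRate_halfspace_le hs η _).trans (EReal.coe_le_coe_iff.2 (by linarith)))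
      ((h.upperExpRate_halfspace_le hs (-η) _).trans (EReal.coe_le_coe_iff.2 (by linarith)))
  exact hrate.trans_lt (EReal.coe_lt_coe_iff.2 (sub_lt_self _ (by positivity)))

/-- Under the tilt by `θ` the mass concentrates near `y = L' θ`, and on `ball y ρ` the tilting
density is at most `e^{s (θ y + |θ| ρ)}`. -/
lemma le_lowerExpRate_ball (h : TendstoScaledCGF l s μ L) (hs : Tendsto s l atTop)
    {θ y ρ : ℝ} (hL : HasDerivAt L y θ) (hρ : 0 < ρ) :
    ((L θ - (θ * y + |θ| * ρ) : ℝ) : EReal) ≤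
      lowerExpRate l s (fun i => μ i (Metric.ball y ρ)) := by
  have htail : upperExpRate l s (fun i => expTilt (μ i) (s i * θ) (Metric.ball y ρ)ᶜ) < L θ := by
    simpa using (h.tilted θ).upperExpRate_compl_ball_lt hs
      (HasDerivAt.comp_const_add θ 0 (by simpa using hL)) hρ
  have htotal : (L θ : EReal) ≤ lowerExpRate l s fun i =>
      expTilt (μ i) (s i * θ) (Metric.ball y ρ) +
        expTilt (μ i) (s i * θ) (Metric.ball y ρ)ᶜ := by
    simp only [measure_add_measure_compl measurableSet_ball, expTilt_univ]
    exact (h θ).liminf_eq.ge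
  have hdensity : ∀ᶠ i in l, ENNReal.ofReal (Real.exp (s i * -(θ * y + |θ| * ρ))) *
      expTilt (μ i) (s i * θ) (Metric.ball y ρ) ≤ μ i (Metric.ball y ρ) := by
    filter_upwards [hs.eventually_gt_atTop 0] with i hsi
    have hexponent : ∀ x ∈ Metric.ball y ρ, s i * θ * x ≤ s i * (θ * y + |θ| * ρ) := fun x hx => by
      rw [mul_assoc]
      gcongr
      have hxy : θ * (x - y) ≤ |θ| * ρ := by
        refine (le_abs_self _).trans ?_
        rw [abs_mul]
        gcongr
        exact (Metric.mem_ball.1 hx).le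
      linarith
    refine (mul_le_mul_right (expTilt_apply_le measurableSet_ball hexponent) _).trans_eq ?_
    rw [← mul_assoc, ofReal_exp_mul_ofReal_exp, neg_add_cancel, mul_zero, Real.exp_zero,
      ENNReal.ofReal_one, one_mul]
  rw [sub_eq_neg_add]
  exact (le_lowerExpRate_exp_mul hs (le_lowerExpRate_of_add hs htotal htail)).trans
    (lowerExpRate_mono hs hdensity)

lemma le_lowerExpRate_of_mem_nhds (h : TendstoScaledCGF l s μ L) (hs : Tendsto s l atTop)
    {θ y : ℝ} (hL : HasDerivAt L y θ) {U : Set ℝ} (hU : U ∈ 𝓝 y) :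
    ((L θ - θ * y : ℝ) : EReal) ≤ lowerExpRate l s (fun i => μ i U) := by
  obtain ⟨r, hr, hrU⟩ := Metric.mem_nhds_iff.1 hU
  have hlim : Tendsto (fun ρ : ℝ => ((L θ - (θ * y + |θ| * ρ) : ℝ) : EReal)) (𝓝[>] 0)
      (𝓝 ((L θ - θ * y : ℝ) : EReal)) := by
    have hcont : Continuous fun ρ : ℝ => ((L θ - (θ * y + |θ| * ρ) : ℝ) : EReal) :=
      continuous_coe_real_ereal.comp (by fun_prop)
    simpa using (hcont.tendsto 0).mono_left nhdsWithin_le_nhds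
  refine le_of_tendsto hlim ?_
  filter_upwards [Ioo_mem_nhdsGT hr] with ρ hρ
  exact (h.le_lowerExpRate_ball hs hL hρ.1).trans <| lowerExpRate_mono hs <|
    .of_forall fun i => measure_mono ((Metric.ball_subset_ball hρ.2.le).trans hrU)

lemma le_lowerExpRate_isOpen (h : TendstoScaledCGF l s μ L) (hs : Tendsto s l atTop)
    (hL : Differentiable ℝ L) {O : Set ℝ} (hO : IsOpen O) :
    -⨅ x ∈ O, legendreTransform L x ≤ lowerExpRate l s (fun i => μ i O) := by
  rw [EReal.neg_le]
  refine le_iInf₂ fun x hx => EReal.le_of_forall_lt_iff_le.1 fun m hm => ?_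
  obtain ⟨θ, hmem, hle⟩ := exists_deriv_mem_of_legendreTransform_le hL hm.le (hO.mem_nhds hx)
  rw [EReal.neg_le]
  calc -(m : EReal) ≤ ((L θ - θ * deriv L θ : ℝ) : EReal) := by
        rw [← EReal.coe_neg, EReal.coe_le_coe_iff]
        linarith
    _ ≤ lowerExpRate l s (fun i => μ i O) :=
      h.le_lowerExpRate_of_mem_nhds hs (hL θ).hasDerivAt (hO.mem_nhds hmem)

/-- The Gärtner–Ellis theorem on the real line. -/
theorem largeDeviationPrinciple (h : TendstoScaledCGF l s μ L) (hs : Tendsto s l atTop)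
    (hL : Differentiable ℝ L) : LargeDeviationPrinciple l s μ (legendreTransform L) where
  lowerSemicontinuous := lowerSemicontinuous_legendreTransform
  isCompact_sublevel := isCompact_legendreTransform_sublevel
  upperExpRate_le _ hC := h.upperExpRate_isClosed_le hs hC
  le_lowerExpRate _ hO := h.le_lowerExpRate_isOpen hs hL hO

end TendstoScaledCGF

end GartnerEllis

section DiscreteMeasure

variable {κ α : Type*} [MeasurableSpace α] {p : κ → ℝ} {x : κ → α}

/-- The discrete measure placing mass `p k` at the point `x k`; negative masses count as zero. -/
noncomputable def discreteMeasure (p : κ → ℝ) (x : κ → α) : Measure α :=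
  Measure.sum fun k => ENNReal.ofReal (p k) • Measure.dirac (x k)

lemma lintegral_ofReal_discreteMeasure {f : α → ℝ} (hf : Measurable f) (hf0 : 0 ≤ f)
    (hp : ∀ k, 0 ≤ p k) (hsum : Summable fun k => p k * f (x k)) :
    ∫⁻ y, ENNReal.ofReal (f y) ∂discreteMeasure p x = ENNReal.ofReal (∑' k, p k * f (x k)) := by
  rw [discreteMeasure, lintegral_sum_measure,
    ENNReal.ofReal_tsum_of_nonneg (fun k => mul_nonneg (hp k) (hf0 _)) hsum]
  refine tsum_congr fun k => ?_
  rw [lintegral_smul_measure, lintegral_dirac' _ hf.ennreal_ofReal, smul_eq_mul,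
    ENNReal.ofReal_mul (hp k)]

lemma discreteMeasure_apply {S : Set α} (hS : MeasurableSet S) (hp : ∀ k, 0 ≤ p k)
    (hsum : Summable p) :
    discreteMeasure p x S = ENNReal.ofReal (∑' k, S.indicator (fun _ => p k) (x k)) := by
  rw [ENNReal.ofReal_tsum_of_nonneg (fun k => Set.indicator_nonneg (fun _ _ => hp k) _)
    (hsum.of_nonneg_of_le (fun k => Set.indicator_nonneg (fun _ _ => hp k) _)
      fun k => Set.indicator_le_self' (fun _ _ => hp k) _), discreteMeasure, Measure.sum_apply _ hS]
  refine tsum_congr fun k => ?_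
  by_cases hk : x k ∈ S <;> simp [Measure.dirac_apply' _ hS, hk]

end DiscreteMeasure

section Asymptotics

lemma isLittleO_sum_range_tsum_mul_pow {c : ℕ → ℝ} (hc : ∀ k, 0 ≤ c k)
    (hsum : ∀ x : ℝ, 0 < x → Summable fun k => c k * x ^ k) {n K : ℕ} (hnK : n ≤ K)
    (hK : 0 < c K) :
    (fun x : ℝ => ∑ k ∈ Finset.range n, c k * x ^ k) =o[atTop] fun x => ∑' k, c k * x ^ k := by
  have hterm : (fun x : ℝ => x ^ K) =O[atTop] fun x => ∑' k, c k * x ^ k := by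
    refine Asymptotics.IsBigO.of_bound (c K)⁻¹ ?_
    filter_upwards [eventually_gt_atTop 0] with x hx
    have hnonneg : ∀ k, 0 ≤ c k * x ^ k := fun k => mul_nonneg (hc k) (by positivity)
    rw [Real.norm_of_nonneg (pow_nonneg hx.le K), Real.norm_of_nonneg (tsum_nonneg hnonneg),
      le_inv_mul_iff₀ hK]
    exact (hsum x hx).le_tsum K fun k _ => hnonneg k
  have hpow : ∀ k ∈ Finset.range n, (fun x : ℝ => c k * x ^ k) =o[atTop] fun x => x ^ K :=
    fun k hk => (Asymptotics.isLittleO_pow_pow_atTop_of_lt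
      ((Finset.mem_range.1 hk).trans_le hnK)).const_mul_left (c k)
  exact (Asymptotics.IsLittleO.fun_sum hpow).trans_isBigO hterm

lemma tendsto_inv_mul_log_of_le_mul {ι : Type*} {l : Filter ι} {s f g : ι → ℝ} {K c : ℝ}
    (hs : Tendsto s l atTop) (hK : 0 < K) (hg : ∀ᶠ i in l, 0 < g i)
    (hlower : ∀ᶠ i in l, g i ≤ K * f i) (hupper : ∀ᶠ i in l, f i ≤ K * g i)
    (hlim : Tendsto (fun i => (s i)⁻¹ * Real.log (g i)) l (𝓝 c)) :
    Tendsto (fun i => (s i)⁻¹ * Real.log (f i)) l (𝓝 c) := by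
  have hconst : Tendsto (fun i => (s i)⁻¹ * Real.log K) l (𝓝 0) := by
    simpa using hs.inv_tendsto_atTop.mul_const (Real.log K)
  refine tendsto_of_tendsto_of_tendsto_of_le_of_le' (by simpa using hlim.sub hconst)
    (by simpa using hlim.add hconst) ?_ ?_
  · filter_upwards [hg, hlower, hs.eventually_gt_atTop 0] with i hgi hi hsi
    have hfi : 0 < f i := pos_of_mul_pos_right (hgi.trans_le hi) hK.le
    have hlog := Real.log_le_log hgi hi
    rw [Real.log_mul hK.ne' hfi.ne'] at hlog
    rw [← mul_sub]
    gcongr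
    linarith
  · filter_upwards [hg, hlower, hupper, hs.eventually_gt_atTop 0] with i hgi hi hi' hsi
    have hfi : 0 < f i := pos_of_mul_pos_right (hgi.trans_le hi) hK.le
    have hlog := Real.log_le_log hfi hi'
    rw [Real.log_mul hK.ne' hgi.ne'] at hlog
    rw [← mul_add]
    gcongr
    linarith

end Asymptotics

section PowerSeriesModel

/-- The weight `d_{k,k} δ_k(t)^k / D_k(δ_k(t))`, proportional to `P(N(t) = k)`. -/
noncomputable def weight (d : ℕ → ℕ → ℝ) (δf : ℕ → ℝ → ℝ) (t : ℝ) (k : ℕ) : ℝ :=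
  d k k * (δf k t) ^ k / Dser d k (δf k t)

/-- The power series distribution `d_k δ(t)^k / D(δ(t))` built from the coefficients common to all
indices `j ≥ n`. -/
noncomputable def refWeight (n : ℕ) (d : ℕ → ℕ → ℝ) (δf : ℕ → ℝ → ℝ) (t : ℝ) (k : ℕ) : ℝ :=
  d k n * (δf n t) ^ k / Dser d n (δf n t)

/-- The probability generating function `D(u δ(t)) / D(δ(t))` of `refWeight`. -/
noncomputable def refPgf (n : ℕ) (d : ℕ → ℕ → ℝ) (δf : ℕ → ℝ → ℝ) (t u : ℝ) : ℝ :=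
  Dser d n (u * δf n t) / Dser d n (δf n t)

/-- The law of `N(t) / v(δ(t))`. -/
noncomputable def scaledLaw (n : ℕ) (d : ℕ → ℕ → ℝ) (δf : ℕ → ℝ → ℝ) (v : ℝ → ℝ) (t : ℝ) :
    Measure ℝ :=
  discreteMeasure (pmfN d δf t) fun k => k / v (δf n t)

lemma pmfN_mul_pow (d : ℕ → ℕ → ℝ) (δf : ℕ → ℝ → ℝ) (t u : ℝ) (k : ℕ) :
    pmfN d δf t k * u ^ k = weight d δf t k * u ^ k / Znorm d δf t :=
  div_mul_eq_mul_div _ _ _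

namespace PSCond

variable {n : ℕ} {d : ℕ → ℕ → ℝ} {δf : ℕ → ℝ → ℝ} {v Δ : ℝ → ℝ} {t u : ℝ}

lemma tendsto_speed (h : PSCond n d δf v Δ) : Tendsto (fun t => v (δf n t)) atTop atTop :=
  h.v_tendsto.comp (h.delta_tendsto n)

lemma differentiable_Lam (h : PSCond n d δf v Δ) : Differentiable ℝ (Lam Δ) := fun θ =>
  ((h.Delta_diff _ (Real.exp_pos θ)).comp θ Real.differentiableAt_exp).sub_const _

lemma refPgf_pos (h : PSCond n d δf v Δ) (ht : 0 < t) (hu : 0 < u) : 0 < refPgf n d δf t u :=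
  div_pos (h.D_pos n _ (mul_pos hu (h.delta_pos n t ht))) (h.D_pos n _ (h.delta_pos n t ht))

lemma weight_nonneg (h : PSCond n d δf v Δ) (ht : 0 < t) (k : ℕ) : 0 ≤ weight d δf t k := by
  have hδ := h.delta_pos k t ht
  exact div_nonneg (mul_nonneg (h.d_nonneg k k) (by positivity)) (h.D_pos k _ hδ).le

lemma weight_eq_refWeight (h : PSCond n d δf v Δ) {k : ℕ} (hk : n ≤ k) :
    weight d δf t k = refWeight n d δf t k := by
  simp only [weight, refWeight, Dser, h.B1_d k hk, h.B1_delta k hk]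

lemma hasSum_refWeight_mul_pow (h : PSCond n d δf v Δ) (ht : 0 < t) (hu : 0 < u) :
    HasSum (fun k => refWeight n d δf t k * u ^ k) (refPgf n d δf t u) := by
  have hseries := (h.D_summable n _ (mul_pos hu (h.delta_pos n t ht))).hasSum.div_const
    (Dser d n (δf n t))
  refine hseries.congr_fun fun k => ?_
  rw [refWeight, mul_pow]
  ring

lemma summable_weight_mul_pow (h : PSCond n d δf v Δ) (ht : 0 < t) (hu : 0 < u) :
    Summable fun k => weight d δf t k * u ^ k := by
  rw [← summable_nat_add_iff n]
  simp only [h.weight_eq_refWeight (Nat.le_add_left n _)]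
  exact (summable_nat_add_iff n).2 (h.hasSum_refWeight_mul_pow ht hu).summable

lemma eventually_weight_le_refWeight (h : PSCond n d δf v Δ) :
    ∀ᶠ t in atTop, ∀ k, weight d δf t k ≤ refWeight n d δf t k := by
  have hinitial : ∀ᶠ t in atTop, ∀ k ∈ Finset.range n, weight d δf t k ≤ refWeight n d δf t k := by
    rw [eventually_all_finset]
    intro k hk
    rw [Finset.mem_range] at hk
    rcases (h.d_nonneg k n).eq_or_lt with hzero | hpos
    · exact .of_forall fun t => by simp [weight, refWeight, h.B3_zero k hk hzero.symm, ← hzero]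
    · filter_upwards [(h.B3_lim k hk hpos).eventually_le_const one_pos, eventually_gt_atTop 0]
        with t hratio ht
      have hδ := h.delta_pos n t ht
      have href : 0 < refWeight n d δf t k :=
        div_pos (mul_pos hpos (by positivity)) (h.D_pos n _ hδ)
      exact (div_le_one href).1 hratio
  filter_upwards [hinitial] with t ht k
  rcases lt_or_ge k n with hk | hk
  · exact ht k (Finset.mem_range.2 hk)
  · exact (h.weight_eq_refWeight hk).le

lemma eventually_sum_range_refWeight_le (h : PSCond n d δf v Δ) (hu : 0 < u) :
    ∀ᶠ t in atTop,
      ∑ k ∈ Finset.range n, refWeight n d δf t k * u ^ k ≤ 1 / 2 * refPgf n d δf t u := by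
  obtain ⟨K, hnK, hK⟩ := h.B2 n
  rw [h.B1_d K hnK] at hK
  have hlittleO := isLittleO_sum_range_tsum_mul_pow (fun k => h.d_nonneg k n) (h.D_summable n)
    hnK hK
  have harg : Tendsto (fun t => u * δf n t) atTop atTop := (h.delta_tendsto n).const_mul_atTop hu
  filter_upwards [harg.eventually (hlittleO.def one_half_pos), eventually_gt_atTop 0] with t hle ht
  have hδ := h.delta_pos n t ht
  have hD := h.D_pos n _ hδ
  change ‖_‖ ≤ 1 / 2 * ‖Dser d n (u * δf n t)‖ at hle
  rw [Real.norm_of_nonneg (h.D_pos n _ (mul_pos hu hδ)).le] at hle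
  calc ∑ k ∈ Finset.range n, refWeight n d δf t k * u ^ k
      = (∑ k ∈ Finset.range n, d k n * (u * δf n t) ^ k) / Dser d n (δf n t) := by
        rw [Finset.sum_div]
        refine Finset.sum_congr rfl fun k _ => ?_
        rw [refWeight, mul_pow]
        ring
    _ ≤ 1 / 2 * Dser d n (u * δf n t) / Dser d n (δf n t) := by
        gcongr
        exact (Real.le_norm_self _).trans hle
    _ = 1 / 2 * refPgf n d δf t u := mul_div_assoc _ _ _

lemma eventually_tsum_weight_mul_pow_le (h : PSCond n d δf v Δ) (hu : 0 < u) :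
    ∀ᶠ t in atTop, ∑' k, weight d δf t k * u ^ k ≤ refPgf n d δf t u := by
  filter_upwards [h.eventually_weight_le_refWeight, eventually_gt_atTop 0] with t hle ht
  have href := h.hasSum_refWeight_mul_pow ht hu
  rw [← href.tsum_eq]
  exact (h.summable_weight_mul_pow ht hu).tsum_le_tsum (fun k => by gcongr; exact hle k)
    href.summable

lemma eventually_half_refPgf_le (h : PSCond n d δf v Δ) (hu : 0 < u) :
    ∀ᶠ t in atTop, 1 / 2 * refPgf n d δf t u ≤ ∑' k, weight d δf t k * u ^ k := by
  filter_upwards [h.eventually_sum_range_refWeight_le hu, eventually_gt_atTop 0] with t hle ht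
  have href := h.hasSum_refWeight_mul_pow ht hu
  have hsplit := href.summable.sum_add_tsum_nat_add n
  rw [href.tsum_eq] at hsplit
  calc 1 / 2 * refPgf n d δf t u
      ≤ ∑' k, refWeight n d δf t (k + n) * u ^ (k + n) := by linarith
    _ = ∑' k, weight d δf t (k + n) * u ^ (k + n) := by
        simp only [h.weight_eq_refWeight (Nat.le_add_left n _)]
    _ ≤ ∑' k, weight d δf t k * u ^ k := by
        rw [← (h.summable_weight_mul_pow ht hu).sum_add_tsum_nat_add n]
        exact le_add_of_nonneg_left <| Finset.sum_nonneg fun k _ =>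
          mul_nonneg (h.weight_nonneg ht k) (by positivity)

lemma eventually_Znorm_mem_Icc (h : PSCond n d δf v Δ) :
    ∀ᶠ t in atTop, Znorm d δf t ∈ Set.Icc (1 / 2) 1 := by
  filter_upwards [h.eventually_tsum_weight_mul_pow_le one_pos,
    h.eventually_half_refPgf_le one_pos, eventually_gt_atTop 0] with t hupper hlower ht
  have hone : refPgf n d δf t 1 = 1 := by
    rw [refPgf, one_mul, div_self (h.D_pos n _ (h.delta_pos n t ht)).ne']
  simp only [hone, one_pow, mul_one] at hupper hlower
  exact ⟨hlower, hupper⟩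

lemma pmfN_nonneg (h : PSCond n d δf v Δ) (ht : 0 < t) (k : ℕ) : 0 ≤ pmfN d δf t k :=
  div_nonneg (h.weight_nonneg ht k) (tsum_nonneg (h.weight_nonneg ht))

lemma summable_pmfN_mul_pow (h : PSCond n d δf v Δ) (ht : 0 < t) (hu : 0 < u) :
    Summable fun k => pmfN d δf t k * u ^ k := by
  simpa only [pmfN_mul_pow] using (h.summable_weight_mul_pow ht hu).div_const _

lemma eventually_tsum_pmfN_mul_pow_le (h : PSCond n d δf v Δ) (hu : 0 < u) :
    ∀ᶠ t in atTop, ∑' k, pmfN d δf t k * u ^ k ≤ 2 * refPgf n d δf t u := by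
  filter_upwards [h.eventually_tsum_weight_mul_pow_le hu, h.eventually_Znorm_mem_Icc,
    eventually_gt_atTop 0] with t hle hZ ht
  have hpos := h.refPgf_pos ht hu
  simp only [pmfN_mul_pow, tsum_div_const]
  rw [div_le_iff₀ (one_half_pos.trans_le hZ.1)]
  calc ∑' k, weight d δf t k * u ^ k ≤ 2 * refPgf n d δf t u * (1 / 2) := by linarith
    _ ≤ 2 * refPgf n d δf t u * Znorm d δf t := by gcongr; exact hZ.1

lemma eventually_refPgf_le (h : PSCond n d δf v Δ) (hu : 0 < u) :
    ∀ᶠ t in atTop, refPgf n d δf t u ≤ 2 * ∑' k, pmfN d δf t k * u ^ k := by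
  filter_upwards [h.eventually_half_refPgf_le hu, h.eventually_Znorm_mem_Icc,
    eventually_gt_atTop 0] with t hle hZ ht
  have hpos := h.refPgf_pos ht hu
  have hdiv : ∑' k, weight d δf t k * u ^ k ≤ ∑' k, pmfN d δf t k * u ^ k := by
    simp only [pmfN_mul_pow, tsum_div_const]
    exact le_div_self (by linarith) (one_half_pos.trans_le hZ.1) hZ.2
  linarith

lemma tendsto_log_refPgf (h : PSCond n d δf v Δ) (θ : ℝ) :
    Tendsto (fun t => (v (δf n t))⁻¹ * Real.log (refPgf n d δf t (Real.exp θ))) atTop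
      (𝓝 (Lam Δ θ)) := by
  have hnum := (h.B1_lim _ (Real.exp_pos θ)).comp (h.delta_tendsto n)
  have hden := (h.B1_lim 1 one_pos).comp (h.delta_tendsto n)
  refine (hnum.sub hden).congr' ?_
  filter_upwards [eventually_gt_atTop 0] with t ht
  have hδ := h.delta_pos n t ht
  simp only [Function.comp_apply, one_mul]
  rw [← mul_sub, refPgf, Real.log_div (h.D_pos n _ (mul_pos (Real.exp_pos θ) hδ)).ne'
    (h.D_pos n _ hδ).ne']

lemma tendsto_log_tsum_pmfN (h : PSCond n d δf v Δ) (θ : ℝ) :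
    Tendsto (fun t => (v (δf n t))⁻¹ * Real.log (∑' k, pmfN d δf t k * Real.exp θ ^ k)) atTop
      (𝓝 (Lam Δ θ)) :=
  tendsto_inv_mul_log_of_le_mul h.tendsto_speed two_pos
    ((eventually_gt_atTop 0).mono fun _ ht => h.refPgf_pos ht (Real.exp_pos θ))
    (h.eventually_refPgf_le (Real.exp_pos θ)) (h.eventually_tsum_pmfN_mul_pow_le (Real.exp_pos θ))
    (h.tendsto_log_refPgf θ)

lemma expMoment_scaledLaw (h : PSCond n d δf v Δ) (ht : 0 < t) (θ : ℝ) :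
    expMoment (scaledLaw n d δf v t) (v (δf n t) * θ) =
      ENNReal.ofReal (∑' k, pmfN d δf t k * Real.exp θ ^ k) := by
  have hv := (h.v_pos _ (h.delta_pos n t ht)).ne'
  have hexp : ∀ k : ℕ, Real.exp (v (δf n t) * θ * (k / v (δf n t))) = Real.exp θ ^ k := fun k => by
    rw [← Real.exp_nat_mul]
    congr 1
    field_simp
  rw [expMoment, scaledLaw, lintegral_ofReal_discreteMeasure (by fun_prop)
    (fun _ => (Real.exp_pos _).le) (h.pmfN_nonneg ht)] <;> simp only [hexp]
  exact h.summable_pmfN_mul_pow ht (Real.exp_pos θ)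

lemma tendstoScaledCGF_scaledLaw (h : PSCond n d δf v Δ) :
    TendstoScaledCGF atTop (fun t => v (δf n t)) (scaledLaw n d δf v) (Lam Δ) := fun θ => by
  refine (continuous_coe_real_ereal.continuousAt.tendsto.comp (h.tendsto_log_tsum_pmfN θ)).congr' ?_
  filter_upwards [h.eventually_refPgf_le (Real.exp_pos θ), eventually_gt_atTop 0] with t hle ht
  have hpos : 0 < ∑' k, pmfN d δf t k * Real.exp θ ^ k := by
    linarith [h.refPgf_pos ht (Real.exp_pos θ)]
  rw [h.expMoment_scaledLaw ht, scaledLog, ENNReal.log_ofReal_of_pos hpos, ← EReal.coe_mul,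
    Function.comp_apply]

lemma scaledLog_scaledLaw (h : PSCond n d δf v Δ) (ht : 0 < t) {S : Set ℝ}
    (hS : MeasurableSet S) :
    scaledLog (v (δf n t)) (scaledLaw n d δf v t S) =
      (((v (δf n t))⁻¹ : ℝ) : EReal) * elog (probScaled n d δf v t S) := by
  have hsum : Summable (pmfN d δf t) := by simpa using h.summable_pmfN_mul_pow ht one_pos
  rw [scaledLog, scaledLaw, discreteMeasure_apply hS (h.pmfN_nonneg ht) hsum, ENNReal.log_ofReal,
    elog, probScaled]

end PSCond

end PowerSeriesModel

/-- Proposition 3.1: under Conditions (B1), (B2), (B3), the family `N(t)/v(δ(t))` satisfies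
the LDP with speed `v(δ(t))` and good rate function `Λ*`. -/
theorem prop_LD_eventually_constant
    (n : ℕ) (d : ℕ → ℕ → ℝ) (δf : ℕ → ℝ → ℝ) (v Δ : ℝ → ℝ)
    (hcond : PSCond n d δf v Δ)
    (hZsum : ∀ t : ℝ, 0 < t →
      Summable (fun j : ℕ => d j j * (δf j t) ^ j / Dser d j (δf j t)))
    (hZpos : ∀ t : ℝ, 0 < t → 0 < Znorm d δf t) :
    LowerSemicontinuous (LamStar Δ) ∧
    (∀ η : ℝ, 0 ≤ η → IsCompact {x : ℝ | LamStar Δ x ≤ (η : EReal)}) ∧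
    (∀ C : Set ℝ, IsClosed C →
      Filter.limsup
        (fun t : ℝ => (((v (δf n t))⁻¹ : ℝ) : EReal) * elog (probScaled n d δf v t C)) atTop
        ≤ - ⨅ x ∈ C, LamStar Δ x) ∧
    (∀ O : Set ℝ, IsOpen O →
      - ⨅ x ∈ O, LamStar Δ x ≤
        Filter.liminf
          (fun t : ℝ => (((v (δf n t))⁻¹ : ℝ) : EReal) * elog (probScaled n d δf v t O)) atTop) := by
  have hldp := hcond.tendstoScaledCGF_scaledLaw.largeDeviationPrinciple hcond.tendsto_speed
    hcond.differentiable_Lam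
  have hprob : ∀ S : Set ℝ, MeasurableSet S →
      (fun t => (((v (δf n t))⁻¹ : ℝ) : EReal) * elog (probScaled n d δf v t S)) =ᶠ[atTop]
        fun t => scaledLog (v (δf n t)) (scaledLaw n d δf v t S) := fun S hS =>
    (eventually_gt_atTop 0).mono fun t ht => (hcond.scaledLog_scaledLaw ht hS).symm
  refine ⟨hldp.lowerSemicontinuous, fun η _ => hldp.isCompact_sublevel η, fun C hC => ?_,
    fun O hO => ?_⟩
  · exact (limsup_congr (hprob C hC.measurableSet)).trans_le (hldp.upperExpRate_le C hC)
  · exact (hldp.le_lowerExpRate O hO).trans_eq (liminf_congr (hprob O hO.measurableSet)).symm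
end

section
/- Under Conditions (B1), (B2) and (B3), for every u > 0 one has lim_{t→∞} (1/v(δ(t))) log ( D(δ(t)) · Σ_{k≥0} d_{k,k} (u δ_k(t))^k / D_k(δ_k(t)) ) = Δ(u). -/
open Filter Topology

/-!
The `k`-th term of `D(δ) ∑ d_{k,k} (u δ_k)^k / D_k(δ_k)` is exactly the `k`-th term `d_k (u δ)^k` of
`D(u δ)` once `k ≥ n`, and by (B3) it is `O` of that term when `k < n`. Conversely, (B2) provides a
term of degree `K ≥ n` common to both series, and as `δ → ∞` it dominates each of the finitely many
terms of degree `< n`. So the two sums are `Θ` of each other, their logarithms differ by `O(1)`, and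
dividing by `v(δ) → ∞` removes the difference.
-/

open Asymptotics

section Logarithm

variable {α : Type*} {l : Filter α} {f g : α → ℝ}

theorem log_le_log_add_log_of_norm_le {a b C : ℝ} (ha : a ≠ 0) (h : ‖a‖ ≤ C * ‖b‖) :
    Real.log a ≤ Real.log C + Real.log b := by
  have hCb : C * ‖b‖ ≠ 0 := ((norm_pos_iff.2 ha).trans_le h).ne'
  calc Real.log a = Real.log ‖a‖ := (Real.log_abs a).symm
    _ ≤ Real.log (C * ‖b‖) := Real.log_le_log (norm_pos_iff.2 ha) h
    _ = Real.log C + Real.log ‖b‖ :=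
        Real.log_mul (left_ne_zero_of_mul hCb) (right_ne_zero_of_mul hCb)
    _ = Real.log C + Real.log b := by rw [Real.norm_eq_abs, Real.log_abs]

-- Where one function vanishes so does the other; `Real.log 0 = 0` and `Real.log` ignores signs.
theorem isBigO_one_log_sub_log_of_isTheta (h : f =Θ[l] g) :
    (fun t => Real.log (f t) - Real.log (g t)) =O[l] fun _ => (1 : ℝ) := by
  obtain ⟨A, hfg⟩ := h.isBigO.bound
  obtain ⟨B, hgf⟩ := h.isBigO_symm.bound
  refine IsBigO.of_bound (|Real.log A| + |Real.log B|) ?_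
  filter_upwards [hfg, hgf, h.eq_zero_iff] with t hft hgt hzero
  rw [norm_one, mul_one, Real.norm_eq_abs]
  by_cases hg : g t = 0
  · rw [hzero.2 hg, hg, sub_self, abs_zero]
    positivity
  have upper := log_le_log_add_log_of_norm_le (mt hzero.1 hg) hft
  have lower := log_le_log_add_log_of_norm_le hg hgt
  rw [abs_le]
  constructor <;>
    linarith [le_abs_self (Real.log A), le_abs_self (Real.log B), abs_nonneg (Real.log A),
      abs_nonneg (Real.log B)]

theorem tendsto_mul_log_of_isTheta {w : α → ℝ} {L : ℝ} (h : f =Θ[l] g) (hw : Tendsto w l (𝓝 0))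
    (hg : Tendsto (fun t => w t * Real.log (g t)) l (𝓝 L)) :
    Tendsto (fun t => w t * Real.log (f t)) l (𝓝 L) := by
  have hdiff : Tendsto (fun t => w t * (Real.log (f t) - Real.log (g t))) l (𝓝 0) :=
    hw.zero_mul_isBoundedUnder_le (isBigO_one_log_sub_log_of_isTheta h).isBoundedUnder_le
  simpa only [mul_sub, add_sub_cancel, add_zero] using hg.add hdiff

end Logarithm

section Series

variable {α : Type*} {l : Filter α} {n : ℕ}

theorem isBigO_tsum_of_nonneg {ι : Type*} {g : ι → α → ℝ} (hg0 : ∀ᶠ t in l, ∀ i, 0 ≤ g i t)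
    (hg : ∀ᶠ t in l, Summable fun i => g i t) (i : ι) : g i =O[l] fun t => ∑' j, g j t := by
  refine IsBigO.of_bound' ?_
  filter_upwards [hg0, hg] with t hg0 hg
  rw [Real.norm_of_nonneg (hg0 i), Real.norm_of_nonneg (tsum_nonneg hg0)]
  exact hg.le_tsum i fun j _ => hg0 j

theorem isBigO_tsum_of_norm_le_tail {E : Type*} [NormedAddCommGroup E] [CompleteSpace E]
    {f : ℕ → α → E} {g : ℕ → α → ℝ} (hg0 : ∀ᶠ t in l, ∀ k, 0 ≤ g k t)
    (hg : ∀ᶠ t in l, Summable fun k => g k t)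
    (hhead : ∀ k < n, f k =O[l] fun t => ∑' j, g j t)
    (htail : ∀ᶠ t in l, ∀ k ≥ n, ‖f k t‖ ≤ g k t) :
    (fun t => ∑' k, f k t) =O[l] fun t => ∑' k, g k t := by
  have htailO : (fun t => ∑' k, f (k + n) t) =O[l] fun t => ∑' k, g k t := by
    refine IsBigO.of_bound' ?_
    filter_upwards [hg0, hg, htail] with t hg0 hg htail
    have hgn : Summable fun k => g (k + n) t := (summable_nat_add_iff n).2 hg
    calc ‖∑' k, f (k + n) t‖
        ≤ ∑' k, g (k + n) t :=
          tsum_of_norm_bounded hgn.hasSum fun k => htail _ (Nat.le_add_left n k)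
      _ ≤ ∑' k, g k t := tsum_comp_le_tsum_of_inj hg hg0 (add_left_injective n)
      _ ≤ ‖∑' k, g k t‖ := Real.le_norm_self _
  have hheadO : (fun t => ∑ k ∈ Finset.range n, f k t) =O[l] fun t => ∑' k, g k t :=
    IsBigO.fun_sum fun k hk => hhead k (Finset.mem_range.1 hk)
  refine (hheadO.add htailO).congr' ?_ EventuallyEq.rfl
  filter_upwards [hg, htail] with t hg htail
  have hf : Summable fun k => f k t := (summable_nat_add_iff n).1 <|
    ((summable_nat_add_iff n).2 hg).of_norm_bounded fun k => htail _ (Nat.le_add_left n k)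
  exact hf.sum_add_tsum_nat_add n

theorem isTheta_tsum_of_eq_tail {f g : ℕ → α → ℝ} {K : ℕ} (hf0 : ∀ᶠ t in l, ∀ k, 0 ≤ f k t)
    (hg0 : ∀ᶠ t in l, ∀ k, 0 ≤ g k t) (hg : ∀ᶠ t in l, Summable fun k => g k t)
    (htail : ∀ᶠ t in l, ∀ k ≥ n, f k t = g k t) (hfg : ∀ k < n, f k =O[l] g k) (hK : n ≤ K)
    (hgK : ∀ k < n, g k =O[l] g K) :
    (fun t => ∑' k, f k t) =Θ[l] fun t => ∑' k, g k t := by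
  have hf : ∀ᶠ t in l, Summable fun k => f k t := by
    filter_upwards [hg, htail] with t hg htail
    refine (summable_nat_add_iff n).1 (((summable_nat_add_iff n).2 hg).congr fun k => ?_)
    exact (htail _ (Nat.le_add_left n k)).symm
  have hgKf : g K =O[l] fun t => ∑' k, f k t :=
    (isBigO_tsum_of_nonneg hf0 hf K).congr' (htail.mono fun t h => h K hK) EventuallyEq.rfl
  constructor
  · refine isBigO_tsum_of_norm_le_tail hg0 hg
      (fun k hk => (hfg k hk).trans (isBigO_tsum_of_nonneg hg0 hg k)) ?_
    filter_upwards [hg0, htail] with t hg0 htail k hk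
    rw [htail k hk, Real.norm_of_nonneg (hg0 k)]
  · refine isBigO_tsum_of_norm_le_tail hf0 hf (fun k hk => (hgK k hk).trans hgKf) ?_
    filter_upwards [hg0, htail] with t hg0 htail k hk
    rw [htail k hk, Real.norm_of_nonneg (hg0 k)]

theorem isBigO_monomial_of_le {a b : ℝ} {x : α → ℝ} {k m : ℕ} (hx : Tendsto x l atTop)
    (hb : b ≠ 0) (hkm : k ≤ m) : (fun t => a * x t ^ k) =O[l] fun t => b * x t ^ m :=
  ((IsBigO.pow_of_le_right (hx.eventually_ge_atTop 1) hkm).const_mul_left a).const_mul_right hb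

end Series

/-- The probability of `k` under the power series distribution with coefficients `d_{·,j}` and
parameter `x`, that is `d_{k,j} x^k / D_j(x)`. Condition (B3) compares `psProb d k (δ_k(t)) k` with
`psProb d n (δ(t)) k`. -/
noncomputable def psProb (d : ℕ → ℕ → ℝ) (j : ℕ) (x : ℝ) (k : ℕ) : ℝ :=
  d k j * x ^ k / Dser d j x

section PowerSeries

variable {α : Type*} {l : Filter α} {d : ℕ → ℕ → ℝ} {n : ℕ}

theorem mul_mul_pow_div_Dser (j k : ℕ) (u x : ℝ) :
    d k j * (u * x) ^ k / Dser d j x = u ^ k * psProb d j x k := by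
  rw [psProb, mul_pow]
  ring

theorem Dser_mul_pow_mul_psProb {j : ℕ} {x : ℝ} (hD : Dser d j x ≠ 0) (k : ℕ) (u : ℝ) :
    Dser d j x * (u ^ k * psProb d j x k) = d k j * (u * x) ^ k := by
  rw [← mul_mul_pow_div_Dser, mul_div_cancel₀ _ hD]

theorem Dser_nonneg {j : ℕ} (hd : ∀ k, 0 ≤ d k j) {x : ℝ} (hx : 0 ≤ x) : 0 ≤ Dser d j x :=
  tsum_nonneg fun k => mul_nonneg (hd k) (pow_nonneg hx k)

theorem psProb_nonneg {j : ℕ} (hd : ∀ k, 0 ≤ d k j) {x : ℝ} (hx : 0 ≤ x) (k : ℕ) :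
    0 ≤ psProb d j x k :=
  div_nonneg (mul_nonneg (hd k) (pow_nonneg hx k)) (Dser_nonneg hd hx)

theorem psProb_congr {i j : ℕ} (h : ∀ k, d k i = d k j) (x : ℝ) (k : ℕ) :
    psProb d i x k = psProb d j x k := by
  simp only [psProb, Dser, h]

theorem isTheta_Dser_mul_tsum_psProb {δf : ℕ → α → ℝ} {u : ℝ} (hu : 0 < u)
    (hd : ∀ k j, 0 ≤ d k j) (hsum : ∀ x, 0 < x → Summable fun k => d k n * x ^ k)
    (hD : ∀ x, 0 < x → Dser d n x ≠ 0) (hpos : ∀ᶠ t in l, ∀ j, 0 < δf j t)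
    (hδ : Tendsto (δf n) l atTop) (hdn : ∀ j, n ≤ j → ∀ k, d k j = d k n)
    (hδn : ∀ j, n ≤ j → δf j = δf n) (hK : ∃ k, n ≤ k ∧ 0 < d k k)
    (hhead : ∀ k < n,
      (fun t => psProb d k (δf k t) k) =O[l] fun t => psProb d n (δf n t) k) :
    (fun t => Dser d n (δf n t) * ∑' k, u ^ k * psProb d k (δf k t) k)
      =Θ[l] fun t => Dser d n (u * δf n t) := by
  obtain ⟨K, hnK, hdK⟩ := hK
  simp only [← tsum_mul_left]
  refine isTheta_tsum_of_eq_tail (n := n) (K := K) (g := fun k t => d k n * (u * δf n t) ^ k)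
    ?diagonal_nonneg ?series_nonneg ?summable ?tail ?head hnK fun k hk =>
      isBigO_monomial_of_le (hδ.const_mul_atTop hu) (hdn K hnK K ▸ hdK.ne') (hk.le.trans hnK)
  case diagonal_nonneg =>
    filter_upwards [hpos] with t ht k
    exact mul_nonneg (Dser_nonneg (hd · n) (ht n).le)
      (mul_nonneg (pow_nonneg hu.le k) (psProb_nonneg (hd · k) (ht k).le k))
  case series_nonneg =>
    filter_upwards [hpos] with t ht k
    exact mul_nonneg (hd k n) (pow_nonneg (mul_pos hu (ht n)).le k)
  case summable => exact hpos.mono fun t ht => hsum _ (mul_pos hu (ht n))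
  case tail =>
    filter_upwards [hpos] with t ht k hk
    rw [hδn k hk, psProb_congr (hdn k hk), Dser_mul_pow_mul_psProb (hD _ (ht n))]
  case head =>
    intro k hk
    refine ((isBigO_refl (fun t => Dser d n (δf n t)) l).mul
      ((hhead k hk).const_mul_left (u ^ k) |>.const_mul_right (pow_pos hu k).ne')).congr'
      EventuallyEq.rfl (hpos.mono fun t ht => Dser_mul_pow_mul_psProb (hD _ (ht n)) k u)

theorem central_extended_limit_general {δf : ℕ → α → ℝ} {v : ℝ → ℝ} {u L : ℝ} (hu : 0 < u)
    (hd : ∀ k j, 0 ≤ d k j)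
    (hsum : ∀ j x, 0 < x → Summable fun k => d k j * x ^ k)
    (hD : ∀ j x, 0 < x → 0 < Dser d j x)
    (hpos : ∀ᶠ t in l, ∀ j, 0 < δf j t)
    (hδ : Tendsto (δf n) l atTop)
    (hdn : ∀ j, n ≤ j → ∀ k, d k j = d k n)
    (hδn : ∀ j, n ≤ j → δf j = δf n)
    (hv : Tendsto v atTop atTop)
    (hL : Tendsto (fun t => (v t)⁻¹ * Real.log (Dser d n (u * t))) atTop (𝓝 L))
    (hK : ∃ k, n ≤ k ∧ 0 < d k k)
    (hhead : ∀ k < n,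
      (fun t => psProb d k (δf k t) k) =O[l] fun t => psProb d n (δf n t) k) :
    Tendsto (fun t => (v (δf n t))⁻¹ *
        Real.log (Dser d n (δf n t) * ∑' k, d k k * (u * δf k t) ^ k / Dser d k (δf k t)))
      l (𝓝 L) := by
  simp only [mul_mul_pow_div_Dser]
  exact tendsto_mul_log_of_isTheta
    (isTheta_Dser_mul_tsum_psProb hu hd (hsum n) (fun x hx => (hD n x hx).ne') hpos hδ hdn hδn hK
      hhead)
    (hv.comp hδ).inv_tendsto_atTop (hL.comp hδ)

end PowerSeries

theorem PSCond.isBigO_psProb {n : ℕ} {d : ℕ → ℕ → ℝ} {δf : ℕ → ℝ → ℝ} {v Δ : ℝ → ℝ}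
    (h : PSCond n d δf v Δ) {k : ℕ} (hk : k < n) :
    (fun t => psProb d k (δf k t) k) =O[atTop] fun t => psProb d n (δf n t) k := by
  rcases (h.d_nonneg k n).eq_or_lt with hzero | hpos
  · simp [psProb, ← hzero, h.B3_zero k hk hzero.symm, isBigO_refl]
  · refine (isLittleO_of_tendsto' ?_ (h.B3_lim k hk hpos)).isBigO
    filter_upwards [eventually_gt_atTop 0] with t ht hvanish
    have hδ := h.delta_pos n t ht
    exact absurd hvanish (div_pos (mul_pos hpos (pow_pos hδ k)) (h.D_pos n _ hδ)).ne'

/-- Eq. (3.4) in the proof of Proposition 3.1: for all `u > 0`,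
`(1/v(δ(t))) log ( D(δ(t)) · Σ_k d_{k,k} (u δ_k(t))^k / D_k(δ_k(t)) ) → Δ(u)` as `t → ∞`. -/
theorem central_extended_limit
    (n : ℕ) (d : ℕ → ℕ → ℝ) (δf : ℕ → ℝ → ℝ) (v Δ : ℝ → ℝ)
    (hcond : PSCond n d δf v Δ) :
    ∀ u : ℝ, 0 < u →
      Tendsto (fun t : ℝ => (v (δf n t))⁻¹ *
          Real.log (Dser d n (δf n t) *
            ∑' k : ℕ, d k k * (u * δf k t) ^ k / Dser d k (δf k t)))
        atTop (𝓝 (Δ u)) := by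
  intro u hu
  exact central_extended_limit_general hu hcond.d_nonneg hcond.D_summable hcond.D_pos
    ((eventually_gt_atTop 0).mono fun t ht j => hcond.delta_pos j t ht) (hcond.delta_tendsto n)
    hcond.B1_d hcond.B1_delta hcond.v_tendsto (hcond.B1_lim u hu) (hcond.B2 n)
    fun _ hk => hcond.isBigO_psProb hk
end

section
/- Under Conditions (B1), (B2) and (B3), for every θ ∈ ℝ one has lim_{t→∞} (1/v(δ(t))) log E[e^{θ N(t)}] = Λ(θ), where Λ(θ) = Δ(e^θ) − Δ(1). -/
open Filter Topology

/-!
Only the finitely many weights with `k < n` differ from those of a power series distribution with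
series `A`, and they are of lower order than a single monomial of `A` of degree at least `n`. Hence
`E[e^{θ N(t)}] ~ A(e^θ δ(t)) / A(δ(t))`, and the logarithms of asymptotically equivalent functions
differ by `o(1)`.
-/

section Asymptotics

variable {α : Type*} {l : Filter α}

open Asymptotics

theorem tendsto_log_sub_log_of_isEquivalent {f g : α → ℝ} (hfg : f ~[l] g) :
    Tendsto (fun t => Real.log (f t) - Real.log (g t)) l (𝓝 0) := by
  obtain ⟨φ, hφ, hfφg⟩ := hfg.exists_eq_mul
  have hlogφ : Tendsto (fun t => |Real.log (φ t)|) l (𝓝 0) := by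
    simpa using (hφ.log one_ne_zero).abs
  refine squeeze_zero_norm' ?_ hlogφ
  filter_upwards [hfφg, hφ.eventually_ne one_ne_zero] with t hft hφt
  rw [hft, Pi.mul_apply]
  rcases eq_or_ne (g t) 0 with hgt | hgt
  · simp [hgt]
  · simp [Real.log_mul hφt hgt]

theorem tendsto_mul_log_of_isEquivalent {f g r : α → ℝ} {L : ℝ} (hfg : f ~[l] g)
    (hr : r =O[l] fun _ => (1 : ℝ)) (hg : Tendsto (fun t => r t * Real.log (g t)) l (𝓝 L)) :
    Tendsto (fun t => r t * Real.log (f t)) l (𝓝 L) := by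
  have hdiff : Tendsto (fun t => r t * (Real.log (f t) - Real.log (g t))) l (𝓝 0) :=
    isBoundedUnder_le_mul_tendsto_zero hr.isBoundedUnder_le
      (tendsto_log_sub_log_of_isEquivalent hfg)
  simpa [mul_sub] using hdiff.add hg

theorem isEquivalent_tsum_of_eq_off_finset {ι E : Type*} [NormedAddCommGroup E]
    {f g : α → ι → E} (s : Finset ι)
    (hg : ∀ᶠ t in l, Summable (g t)) (hfg : ∀ᶠ t in l, ∀ i ∉ s, f t i = g t i)
    (hf_head : ∀ i ∈ s, (fun t => f t i) =o[l] fun t => ∑' j, g t j)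
    (hg_head : ∀ i ∈ s, (fun t => g t i) =o[l] fun t => ∑' j, g t j) :
    (fun t => ∑' i, f t i) ~[l] fun t => ∑' i, g t i := by
  have hdiff : (fun t => ∑ i ∈ s, (f t i - g t i)) =o[l] fun t => ∑' j, g t j :=
    IsLittleO.fun_sum fun i hi => (hf_head i hi).sub (hg_head i hi)
  refine hdiff.congr' ?_ EventuallyEq.rfl
  filter_upwards [hg, hfg] with t hgt hfgt
  have hsum : HasSum (fun i => f t i - g t i) (∑ i ∈ s, (f t i - g t i)) :=
    hasSum_sum_of_ne_finset_zero fun i hi => sub_eq_zero.2 (hfgt i hi)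
  have hf : HasSum (f t) (∑ i ∈ s, (f t i - g t i) + ∑' i, g t i) := by
    simpa using hsum.add hgt.hasSum
  simp [hf.tsum_eq]

end Asymptotics

section PowerSeries

open Asymptotics

variable {a : ℕ → ℝ} {m : ℕ}

theorem mul_pow_le_tsum_mul_pow (ha : ∀ k, 0 ≤ a k) (m : ℕ) {x : ℝ} (hx : 0 ≤ x)
    (hsum : Summable fun k => a k * x ^ k) : a m * x ^ m ≤ ∑' k, a k * x ^ k :=
  hsum.le_tsum m fun k _ => mul_nonneg (ha k) (pow_nonneg hx k)

theorem pow_isBigO_tsum_mul_pow (ha : ∀ k, 0 ≤ a k)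
    (hsum : ∀ x : ℝ, 0 < x → Summable fun k => a k * x ^ k) (hm : 0 < a m) :
    (fun x : ℝ => x ^ m) =O[atTop] fun x => ∑' k, a k * x ^ k := by
  refine IsBigO.of_bound (a m)⁻¹ ?_
  filter_upwards [eventually_gt_atTop 0] with x hx
  have hle := mul_pow_le_tsum_mul_pow ha m hx.le (hsum x hx)
  rw [Real.norm_of_nonneg (by positivity), le_inv_mul_iff₀ hm]
  exact hle.trans (Real.le_norm_self _)

variable {α : Type*} {l : Filter α} {n : ℕ} {x c : α → ℝ} {w : α → ℕ → ℝ}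

theorem isEquivalent_tsum_pow_mul (ha : ∀ k, 0 ≤ a k)
    (hsum : ∀ y : ℝ, 0 < y → Summable fun k => a k * y ^ k) (hnm : n ≤ m) (hm : 0 < a m)
    (hx : Tendsto x l atTop)
    (hw_tail : ∀ᶠ t in l, ∀ k, n ≤ k → w t k = c t * (a k * x t ^ k))
    (hw_head : ∀ k < n, (fun t => w t k) =o[l] fun t => c t * x t ^ m) {u : ℝ} (hu : 0 < u) :
    (fun t => ∑' k, u ^ k * w t k) ~[l] fun t => c t * ∑' k, a k * (u * x t) ^ k := by
  have hux : Tendsto (fun t => u * x t) l atTop := hx.const_mul_atTop hu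
  have hseries : (fun t => c t * (u * x t) ^ m) =O[l] fun t => c t * ∑' k, a k * (u * x t) ^ k :=
    (isBigO_refl c l).mul ((pow_isBigO_tsum_mul_pow ha hsum hm).comp_tendsto hux)
  have hpow : (fun t => c t * x t ^ m) =O[l] fun t => c t * (u * x t) ^ m := by
    simp only [mul_pow, mul_left_comm (c _)]
    exact isBigO_self_const_mul (pow_ne_zero m hu.ne') _ l
  simp only [← tsum_mul_left] at hseries ⊢
  refine isEquivalent_tsum_of_eq_off_finset (Finset.range n) ?_ ?_ ?_ ?_
  · filter_upwards [hux.eventually_gt_atTop 0] with t ht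
    exact (hsum _ ht).mul_left _
  · filter_upwards [hw_tail] with t ht k hk
    rw [ht k (not_lt.1 (mt Finset.mem_range.2 hk))]
    ring
  · intro k hk
    exact (((hw_head k (Finset.mem_range.1 hk)).const_mul_left _).trans_isBigO hpow).trans_isBigO
      hseries
  · intro k hk
    have hlt : k < m := (Finset.mem_range.1 hk).trans_le hnm
    have hmonomial := ((isLittleO_pow_pow_atTop_of_lt hlt).comp_tendsto hux).const_mul_left (a k)
    exact ((isBigO_refl c l).mul_isLittleO hmonomial).trans_isBigO hseries

/-- For `N(t)`, the rate `r` is `1 / v`, and the scale `c`, which cancels in the normalization, is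
`1 / D(δ(t))`. -/
theorem limit_log_mgf_general {r Δ : ℝ → ℝ} (ha : ∀ k, 0 ≤ a k)
    (hsum : ∀ y : ℝ, 0 < y → Summable fun k => a k * y ^ k) (hnm : n ≤ m) (hm : 0 < a m)
    (hx : Tendsto x l atTop) (hc : ∀ᶠ t in l, c t ≠ 0)
    (hw_tail : ∀ᶠ t in l, ∀ k, n ≤ k → w t k = c t * (a k * x t ^ k))
    (hw_head : ∀ k < n, (fun t => w t k) =o[l] fun t => c t * x t ^ m)
    (hr : r =O[atTop] fun _ => (1 : ℝ))
    (hΔ : ∀ u : ℝ, 0 < u →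
      Tendsto (fun s => r s * Real.log (∑' k, a k * (u * s) ^ k)) atTop (𝓝 (Δ u)))
    (θ : ℝ) :
    Tendsto (fun t => r (x t) * Real.log (∑' k : ℕ, Real.exp (θ * k) * (w t k / ∑' j, w t j)))
      l (𝓝 (Δ (Real.exp θ) - Δ 1)) := by
  set A : ℝ → ℝ := fun y => ∑' k, a k * y ^ k
  have hA_pos (y : ℝ) (hy : 0 < y) : 0 < A y :=
    (by positivity : 0 < a m * y ^ m).trans_le (mul_pow_le_tsum_mul_pow ha m hy.le (hsum y hy))
  have hequiv {u : ℝ} (hu : 0 < u) := isEquivalent_tsum_pow_mul ha hsum hnm hm hx hw_tail hw_head hu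
  have hmgf : (fun t => ∑' k : ℕ, Real.exp (θ * k) * (w t k / ∑' j, w t j)) ~[l]
      fun t => A (Real.exp θ * x t) / A (1 * x t) := by
    refine ((hequiv (Real.exp_pos θ)).div (hequiv one_pos)).congr_right ?_ |>.congr_left ?_
    · filter_upwards [hc] with t ht using mul_div_mul_left _ _ ht
    · refine .of_forall fun t => ?_
      simp [← tsum_div_const, mul_div_assoc, ← Real.exp_nat_mul, mul_comm θ]
  refine tendsto_mul_log_of_isEquivalent hmgf (hr.comp_tendsto hx) ?_
  refine (((hΔ _ (Real.exp_pos θ)).sub (hΔ 1 one_pos)).comp hx).congr' ?_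
  filter_upwards [hx.eventually_gt_atTop 0] with t ht
  simp only [Function.comp_apply]
  rw [Real.log_div (hA_pos _ (by positivity)).ne' (hA_pos _ (by positivity)).ne', mul_sub]

end PowerSeries

/-- The unnormalized probability `d_{k,k} (δ_k(t))^k / D_k(δ_k(t))` of the event `N(t) = k`. -/
noncomputable def weightN (d : ℕ → ℕ → ℝ) (δf : ℕ → ℝ → ℝ) (t : ℝ) (k : ℕ) : ℝ :=
  d k k * (δf k t) ^ k / Dser d k (δf k t)

namespace PSCond

open Asymptotics

variable {n : ℕ} {d : ℕ → ℕ → ℝ} {δf : ℕ → ℝ → ℝ} {v Δ : ℝ → ℝ}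

theorem eventually_inv_Dser_ne_zero (h : PSCond n d δf v Δ) (j : ℕ) :
    ∀ᶠ t in atTop, (Dser d j (δf j t))⁻¹ ≠ 0 := by
  filter_upwards [eventually_gt_atTop 0] with t ht
  exact inv_ne_zero (h.D_pos j _ (h.delta_pos j t ht)).ne'

theorem weightN_of_le (h : PSCond n d δf v Δ) {k : ℕ} (hk : n ≤ k) (t : ℝ) :
    weightN d δf t k = (Dser d n (δf n t))⁻¹ * (d k n * δf n t ^ k) := by
  simp only [weightN, Dser, h.B1_d k hk, h.B1_delta k hk, div_eq_inv_mul]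

theorem weightN_isLittleO_of_lt (h : PSCond n d δf v Δ) {k m : ℕ} (hk : k < n) (hkm : k ≤ m) :
    (fun t => weightN d δf t k) =o[atTop] fun t => (Dser d n (δf n t))⁻¹ * δf n t ^ m := by
  rcases (h.d_nonneg k n).eq_or_lt with hd | hd
  · simp only [weightN, h.B3_zero k hk hd.symm, zero_mul, zero_div]
    exact isLittleO_zero _ _
  have hB3 : (fun t => weightN d δf t k) =o[atTop]
      fun t => d k n * δf n t ^ k / Dser d n (δf n t) := by
    refine (isLittleO_iff_tendsto' ?_).2 (h.B3_lim k hk hd)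
    filter_upwards [eventually_gt_atTop 0] with t ht hzero
    have hδ := h.delta_pos n t ht
    have hD := h.D_pos n _ hδ
    exact absurd hzero (by positivity)
  have hpow : (fun t => δf n t ^ k) =O[atTop] fun t => δf n t ^ m :=
    (IsBigO.pow_of_le_right (eventually_ge_atTop 1) hkm).comp_tendsto (h.delta_tendsto n)
  refine hB3.trans_isBigO ?_
  simp only [div_eq_inv_mul]
  exact (isBigO_refl _ _).mul (hpow.const_mul_left _)

end PSCond

/-- Limit (3.3) in the proof of Proposition 3.1: for all `θ ∈ ℝ`,
`(1/v(δ(t))) log E[e^{θ N(t)}] → Λ(θ) = Δ(e^θ) - Δ(1)` as `t → ∞`. -/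
theorem limit_log_mgf
    (n : ℕ) (d : ℕ → ℕ → ℝ) (δf : ℕ → ℝ → ℝ) (v Δ : ℝ → ℝ)
    (hcond : PSCond n d δf v Δ)
    (hZsum : ∀ t : ℝ, 0 < t →
      Summable (fun j : ℕ => d j j * (δf j t) ^ j / Dser d j (δf j t)))
    (hZpos : ∀ t : ℝ, 0 < t → 0 < Znorm d δf t) :
    ∀ θ : ℝ,
      Tendsto (fun t : ℝ => (v (δf n t))⁻¹ *
          Real.log (∑' k : ℕ, Real.exp (θ * (k : ℝ)) * pmfN d δf t k))
        atTop (𝓝 (Lam Δ θ)) := by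
  obtain ⟨m, hnm, hm⟩ := hcond.B2 n
  exact limit_log_mgf_general (w := weightN d δf) (r := v⁻¹) (hcond.d_nonneg · n)
    (hcond.D_summable n) hnm (hcond.B1_d m hnm m ▸ hm) (hcond.delta_tendsto n)
    (hcond.eventually_inv_Dser_ne_zero n) (.of_forall fun t _ hk => hcond.weightN_of_le hk t)
    (fun _ hk => hcond.weightN_isLittleO_of_lt hk (hk.le.trans hnm))
    (hcond.v_tendsto.inv_tendsto_atTop.isBigO_one ℝ) hcond.B1_lim
end

section
/- Under Conditions (B1), (B2) and (B3), for every u > 0 one has lim_{t→∞} R_n(u,t) · D(δ(t)) / D(uδ(t)) = 0. -/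
open Filter Topology

/-!
Let `w_k(x) = d_k x ^ k / D(x)`. Multiplying `u ^ k * w_k(δ)` by `D(δ) / D(uδ)` tilts the parameter
and gives exactly `w_k(uδ)`. By (B3) the `k`-th summand of `R_n` is `O(u ^ k * w_k(δ))`, so after
the multiplication it is `O(w_k(uδ))`. This vanishes in the limit because (B2) provides a positive
coefficient `d_m` with `m ≥ n > k`, so that `D` outgrows `x ^ k`.
-/

open Asymptotics

section PowerSeries

variable {a : ℕ → ℝ} {k m : ℕ} {u x : ℝ}

/-- The sum of the real power series with coefficients `a`, equal to the junk value `0` where the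
series diverges. By definition, `Dser d j` is `seriesSum (d · j)`. -/
noncomputable def seriesSum (a : ℕ → ℝ) (x : ℝ) : ℝ := ∑' k : ℕ, a k * x ^ k

/-- The mass at `k` of the power series distribution with coefficients `a` and parameter `x`. -/
noncomputable def powerSeriesMass (a : ℕ → ℝ) (k : ℕ) (x : ℝ) : ℝ := a k * x ^ k / seriesSum a x

theorem mul_pow_le_seriesSum (ha : ∀ k, 0 ≤ a k) (hx : 0 ≤ x)
    (hsum : Summable fun k => a k * x ^ k) (m : ℕ) : a m * x ^ m ≤ seriesSum a x :=
  hsum.le_tsum m fun k _ => mul_nonneg (ha k) (pow_nonneg hx k)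

theorem seriesSum_pos (ha : ∀ k, 0 ≤ a k) (hm : 0 < a m) (hx : 0 < x)
    (hsum : Summable fun k => a k * x ^ k) : 0 < seriesSum a x :=
  (mul_pos hm (pow_pos hx m)).trans_le (mul_pow_le_seriesSum ha hx.le hsum m)

theorem isBigO_pow_seriesSum (ha : ∀ k, 0 ≤ a k) (hm : 0 < a m)
    (hsum : ∀ x, 0 < x → Summable fun k => a k * x ^ k) :
    (fun x : ℝ => x ^ m) =O[atTop] seriesSum a := by
  refine (isBigO_const_mul_left_iff hm.ne').1 (.of_norm_eventuallyLE ?_)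
  filter_upwards [eventually_gt_atTop 0] with x hx
  rw [Real.norm_of_nonneg (mul_pos hm (pow_pos hx m)).le]
  exact mul_pow_le_seriesSum ha hx.le (hsum x hx) m

theorem tendsto_powerSeriesMass_atTop (ha : ∀ k, 0 ≤ a k) (hm : 0 < a m)
    (hsum : ∀ x, 0 < x → Summable fun k => a k * x ^ k) (hkm : k < m) :
    Tendsto (powerSeriesMass a k) atTop (𝓝 0) :=
  (((isLittleO_pow_pow_atTop_of_lt hkm).trans_isBigO
    (isBigO_pow_seriesSum ha hm hsum)).const_mul_left (a k)).tendsto_div_nhds_zero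

theorem pow_mul_powerSeriesMass_mul_div (hx : seriesSum a x ≠ 0) :
    u ^ k * powerSeriesMass a k x * (seriesSum a x / seriesSum a (u * x)) =
      powerSeriesMass a k (u * x) := by
  rw [powerSeriesMass, powerSeriesMass, mul_pow]
  field_simp

variable {α : Type*} {l : Filter α} {δ : α → ℝ}

theorem tendsto_pow_mul_sub_powerSeriesMass (ha : ∀ k, 0 ≤ a k) (hm : 0 < a m)
    (hsum : ∀ x, 0 < x → Summable fun k => a k * x ^ k) (hkm : k < m)
    (hδ : Tendsto δ l atTop) {p : α → ℝ} (hp : p =O[l] fun t => powerSeriesMass a k (δ t))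
    (hu : 0 < u) :
    Tendsto (fun t => u ^ k * (p t - powerSeriesMass a k (δ t)) *
      (seriesSum a (δ t) / seriesSum a (u * δ t))) l (𝓝 0) := by
  have tilt : (fun t => u ^ k * powerSeriesMass a k (δ t) *
      (seriesSum a (δ t) / seriesSum a (u * δ t))) =ᶠ[l]
        fun t => powerSeriesMass a k (u * δ t) := by
    filter_upwards [hδ.eventually_gt_atTop 0] with t ht
    exact pow_mul_powerSeriesMass_mul_div (seriesSum_pos ha hm ht (hsum _ ht)).ne'
  have domination := ((isBigO_refl (fun _ : α => u ^ k) l).mul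
    (hp.sub (isBigO_refl _ l))).mul
      (isBigO_refl (fun t => seriesSum a (δ t) / seriesSum a (u * δ t)) l)
  exact (domination.trans_eventuallyEq tilt).trans_tendsto
    ((tendsto_powerSeriesMass_atTop ha hm hsum hkm).comp (hδ.const_mul_atTop hu))

theorem Rn_ratio_limit_general (ha : ∀ k, 0 ≤ a k) (hm : 0 < a m)
    (hsum : ∀ x, 0 < x → Summable fun k => a k * x ^ k) {s : Finset ℕ} (hs : ∀ k ∈ s, k < m)
    (hδ : Tendsto δ l atTop) {p : ℕ → α → ℝ}
    (hp : ∀ k ∈ s, p k =O[l] fun t => powerSeriesMass a k (δ t)) (hu : 0 < u) :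
    Tendsto (fun t => (∑ k ∈ s, u ^ k * (p k t - powerSeriesMass a k (δ t))) *
      seriesSum a (δ t) / seriesSum a (u * δ t)) l (𝓝 0) := by
  simp only [Finset.sum_mul, Finset.sum_div, mul_div_assoc]
  simpa only [Finset.sum_const_zero] using tendsto_finsetSum s fun k hk =>
    tendsto_pow_mul_sub_powerSeriesMass ha hm hsum (hs k hk) hδ (hp k hk) hu

end PowerSeries

theorem Rfun_eq_sum_pow_mul (n : ℕ) (d : ℕ → ℕ → ℝ) (δf : ℕ → ℝ → ℝ) (u t : ℝ) :
    Rfun n d δf u t = ∑ k ∈ Finset.range n, u ^ k *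
      (powerSeriesMass (d · k) k (δf k t) - powerSeriesMass (d · n) k (δf n t)) := by
  refine Finset.sum_congr rfl fun k _ => ?_
  simp only [powerSeriesMass, seriesSum, Dser]
  ring

namespace PSCond

variable {n k : ℕ} {d : ℕ → ℕ → ℝ} {δf : ℕ → ℝ → ℝ} {v Δ : ℝ → ℝ}

theorem exists_coeff_pos (hcond : PSCond n d δf v Δ) : ∃ m, n ≤ m ∧ 0 < d m n := by
  obtain ⟨m, hnm, hm⟩ := hcond.B2 n
  exact ⟨m, hnm, hcond.B1_d m hnm m ▸ hm⟩

theorem isLittleO_powerSeriesMass (hcond : PSCond n d δf v Δ) (hk : k < n) :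
    (fun t => powerSeriesMass (d · k) k (δf k t)) =o[atTop]
      fun t => powerSeriesMass (d · n) k (δf n t) := by
  rcases (hcond.d_nonneg k n).eq_or_lt with hzero | hpos
  · simp only [powerSeriesMass, hcond.B3_zero k hk hzero.symm, zero_mul, zero_div]
    exact isLittleO_zero _ _
  · refine (isLittleO_iff_tendsto' ?_).2 (hcond.B3_lim k hk hpos)
    filter_upwards [eventually_gt_atTop 0] with t ht hmass
    have hδ := hcond.delta_pos n t ht
    exact absurd hmass (div_pos (mul_pos hpos (pow_pos hδ k)) (hcond.D_pos n _ hδ)).ne'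

end PSCond

/-- Eq. (3.6) in the paper: under Conditions (B1), (B2), (B3), for all `u > 0`,
`R_n(u,t) · D(δ(t))/D(uδ(t)) → 0` as `t → ∞`. -/
theorem Rn_ratio_limit
    (n : ℕ) (d : ℕ → ℕ → ℝ) (δf : ℕ → ℝ → ℝ) (v Δ : ℝ → ℝ)
    (hcond : PSCond n d δf v Δ) :
    ∀ u : ℝ, 0 < u →
      Tendsto (fun t : ℝ => Rfun n d δf u t * Dser d n (δf n t) / Dser d n (u * δf n t))
        atTop (𝓝 0) := by
  intro u hu
  obtain ⟨m, hnm, hm⟩ := hcond.exists_coeff_pos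
  simp only [Rfun_eq_sum_pow_mul]
  exact Rn_ratio_limit_general (hcond.d_nonneg · n) hm (hcond.D_summable n)
    (fun _ hk => (Finset.mem_range.1 hk).trans_le hnm) (hcond.delta_tendsto n)
    (fun _ hk => (hcond.isLittleO_powerSeriesMass (Finset.mem_range.1 hk)).isBigO) hu
end

section
/- Assume Conditions (B1), (B2), (B3), that Δ is twice differentiable at 1 (so Λ''(0) exists), and the boundedness hypotheses (i), (ii), (iii). Then for every family of positive numbers {a(t) : t > 0} with a(t) → 0 and v(δ(t))·a(t) → ∞ as t → ∞, the family of random variables {(N(t) − E[N(t)]) · √(v(δ(t)) a(t)) / v(δ(t)) : t > 0} satisfies the large deviation principle with speed 1/a(t) and good rate function Λ̃* given by Λ̃*(x) = x²/(2Λ''(0)) if Λ''(0) > 0, and, if Λ''(0) = 0, Λ̃*(0) = 0 and Λ̃*(x) = ∞ for x ≠ 0; i.e. limsup_{t→∞} a(t) log P(X_t ∈ C) ≤ −inf_C Λ̃* for every closed C ⊆ ℝ and liminf_{t→∞} a(t) log P(X_t ∈ O) ≥ −inf_O Λ̃* for every open O ⊆ ℝ, where X_t := (N(t) − E[N(t)])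 √(v(δ(t)) a(t)) / v(δ(t)). -/
open Filter Topology

/-- The moderate deviations rate function `Λ̃*` (with `c = Λ''(0)`):
`x²/(2c)` when `c > 0`; the indicator-type rate when `c = 0`. -/
noncomputable def tildeStar (c : ℝ) (x : ℝ) : EReal :=
  if 0 < c then (((x ^ 2 / (2 * c)) : ℝ) : EReal)
  else (if x = 0 then (0 : EReal) else ⊤)

/-- `P( (N(t) - E[N(t)]) √(v(δ(t)) a(t)) / v(δ(t)) ∈ S )`. -/
noncomputable def probMD (n : ℕ) (d : ℕ → ℕ → ℝ) (δf : ℕ → ℝ → ℝ) (v a : ℝ → ℝ)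
    (t : ℝ) (S : Set ℝ) : ℝ :=
  ∑' k : ℕ, S.indicator (fun _ => pmfN d δf t k)
    (((k : ℝ) - meanN d δf t) * Real.sqrt (v (δf n t) * a t) / v (δf n t))

/-!
Suppose that `a t` times the cumulant generating function of `X t` at `l / a t` tends to
`c * l ^ 2 / 2` for every real `l`. Tilting the laws by `l / a t` and centering at `c * l` preserves
this hypothesis, so the Chernoff bound gives the upper bound in the large deviation principle and,
applied to the tilted laws, the concentration near `c * l` needed for the lower bound; every point
at which the rate function is finite is of the form `c * l`.

For the weights of `N t`, the first `n` terms of the generating function are negligible against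
`D (u t * δ t) / D (δ t)` as `u t → 1`, because `D` grows faster than every power. The cumulant
generating function of `N t` is therefore that of the power series distribution up to `o(1)`, that
is, `v (δ t) * Λ` up to `O(1)` by (i). The Taylor expansion of `Λ` at `0` yields the quadratic
limit, while (ii) and (iii) make the error in centering at the mean of order `√(v (δ t))`, hence
harmless.
-/

section LargeDeviations

open MeasureTheory ProbabilityTheory Real

variable {ι : Type*} {L : Filter ι} {a : ι → ℝ}

/-- The large deviation principle along the filter `L`, with speed `1 / a t` and good rate function
`I`, for a family of set functions `P t` (the laws of the random variables in question). -/
structure LargeDeviationPrinciple_s7 {E : Type*} [TopologicalSpace E] (L : Filter ι) (a : ι → ℝ)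
    (P : ι → Set E → ℝ) (I : E → EReal) : Prop where
  lowerSemicontinuous : LowerSemicontinuous I
  isCompact_sublevel (η : ℝ) : IsCompact {x | I x ≤ η}
  limsup_le (C : Set E) : IsClosed C →
    limsup (fun t ↦ (a t : EReal) * elog (P t C)) L ≤ -⨅ x ∈ C, I x
  le_liminf (O : Set E) : IsOpen O →
    -⨅ x ∈ O, I x ≤ liminf (fun t ↦ (a t : EReal) * elog (P t O)) L

theorem LargeDeviationPrinciple_s7.congr {E : Type*} [TopologicalSpace E] {P Q : ι → Set E → ℝ}
    {I : E → EReal} (h : LargeDeviationPrinciple_s7 L a P I) (hPQ : P =ᶠ[L] Q) :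
    LargeDeviationPrinciple_s7 L a Q I where
  lowerSemicontinuous := h.lowerSemicontinuous
  isCompact_sublevel := h.isCompact_sublevel
  limsup_le C hC := by
    refine (limsup_congr ?_).trans_le (h.limsup_le C hC)
    filter_upwards [hPQ] with t ht using by rw [ht]
  le_liminf O hO := by
    refine (h.le_liminf O hO).trans_eq (liminf_congr ?_)
    filter_upwards [hPQ] with t ht using by rw [ht]

theorem mul_elog_le_of_le_exp {s P x : ℝ} (hs : 0 < s) (h : P ≤ exp (x / s)) :
    (s : EReal) * elog P ≤ x := by
  unfold elog
  split_ifs with hP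
  · rw [EReal.coe_mul_bot_of_pos hs]
    exact bot_le
  · rw [← EReal.coe_mul, EReal.coe_le_coe_iff, ← le_div_iff₀' hs]
    exact (log_le_iff_le_exp (not_le.1 hP)).2 h

theorem le_mul_elog_of_exp_le {s P x : ℝ} (hs : 0 < s) (h : exp (x / s) ≤ P) :
    (x : EReal) ≤ s * elog P := by
  have hP : 0 < P := (exp_pos _).trans_le h
  rw [elog, if_neg hP.not_ge, ← EReal.coe_mul, EReal.coe_le_coe_iff, ← div_le_iff₀' hs]
  exact (le_log_iff_exp_le hP).2 h

theorem eventually_const_mul_exp_div_le (ha : Tendsto a L (𝓝[>] 0)) (K : ℝ) {x y : ℝ}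
    (hxy : x < y) : ∀ᶠ t in L, K * exp (x / a t) ≤ exp (y / a t) := by
  have hexp : Tendsto (fun t ↦ exp ((y - x) * (a t)⁻¹)) L atTop :=
    tendsto_exp_atTop.comp (ha.inv_tendsto_nhdsGT_zero.const_mul_atTop (sub_pos.2 hxy))
  filter_upwards [hexp.eventually_ge_atTop K] with t ht
  calc K * exp (x / a t) ≤ exp ((y - x) * (a t)⁻¹) * exp (x / a t) := by gcongr
    _ = exp (y / a t) := by rw [← exp_add]; ring_nf

section RateFunction

variable {c : ℝ}

theorem tildeStar_of_pos (hc : 0 < c) (x : ℝ) : tildeStar c x = ((x ^ 2 / (2 * c) : ℝ) : EReal) :=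
  if_pos hc

theorem tildeStar_of_nonpos (hc : c ≤ 0) (x : ℝ) : tildeStar c x = if x = 0 then 0 else ⊤ :=
  if_neg hc.not_gt

theorem lowerSemicontinuous_tildeStar (c : ℝ) : LowerSemicontinuous (tildeStar c) := by
  rcases lt_or_ge 0 c with hc | hc
  · rw [funext (tildeStar_of_pos hc)]
    exact (continuous_coe_real_ereal.comp (by fun_prop)).lowerSemicontinuous
  · have hind : tildeStar c = ({0}ᶜ : Set ℝ).indicator fun _ ↦ ⊤ := by
      ext x
      simp [tildeStar_of_nonpos hc, Set.indicator_apply, ite_not]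
    rw [hind]
    exact isOpen_compl_singleton.lowerSemicontinuous_indicator le_top

theorem isCompact_tildeStar_le (c η : ℝ) : IsCompact {x | tildeStar c x ≤ η} := by
  have hclosed : IsClosed {x | tildeStar c x ≤ η} :=
    (lowerSemicontinuous_tildeStar c).isClosed_preimage η
  rcases lt_or_ge 0 c with hc | hc
  · refine (isCompact_closedBall 0 √(2 * c * η)).of_isClosed_subset hclosed fun x hx ↦ ?_
    rw [Set.mem_ofPred_eq, tildeStar_of_pos hc, EReal.coe_le_coe_iff, div_le_iff₀' (by positivity)]
      at hx
    simpa using abs_le_sqrt hx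
  · refine isCompact_singleton.of_isClosed_subset (s := {0}) hclosed fun x hx ↦ ?_
    by_contra hx0
    simp_all [tildeStar_of_nonpos hc]

theorem exists_lt_of_lt_tildeStar (hc : 0 ≤ c) {r x : ℝ} (h : (r : EReal) < tildeStar c x) :
    ∃ l, 0 ≤ l ∧ r < l * |x| - c * l ^ 2 / 2 := by
  rcases hc.eq_or_lt with rfl | hc
  · rw [tildeStar_of_nonpos le_rfl] at h
    split_ifs at h with hx
    · exact ⟨0, le_rfl, by simpa using h⟩
    · refine ⟨(|r| + 1) / |x|, by positivity, ?_⟩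
      rw [div_mul_cancel₀ _ (abs_ne_zero.2 hx)]
      linarith [le_abs_self r]
  · rw [tildeStar_of_pos hc, EReal.coe_lt_coe_iff, ← sq_abs] at h
    refine ⟨|x| / c, by positivity, h.trans_eq ?_⟩
    field_simp
    ring

theorem exists_eq_mul_of_tildeStar_ne_top (hc : 0 ≤ c) {x : ℝ} (h : tildeStar c x ≠ ⊤) :
    ∃ l, x = c * l ∧ tildeStar c x = ((c * l ^ 2 / 2 : ℝ) : EReal) := by
  rcases hc.eq_or_lt with rfl | hc
  · rw [tildeStar_of_nonpos le_rfl] at h ⊢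
    exact ⟨0, by simp_all, by simp_all⟩
  · refine ⟨x / c, by field_simp, ?_⟩
    rw [tildeStar_of_pos hc]
    congr 1
    field_simp

end RateFunction

section Chernoff

variable {Ω : Type*} [MeasurableSpace Ω] {μ : Measure Ω} {X : Ω → ℝ}

theorem two_le_mgf_add_mgf_neg [IsProbabilityMeasure μ] {s : ℝ}
    (hpos : Integrable (fun ω ↦ exp (s * X ω)) μ) (hneg : Integrable (fun ω ↦ exp (-s * X ω)) μ) :
    2 ≤ mgf X μ s + mgf X μ (-s) := by
  rw [mgf, mgf, ← integral_add hpos hneg]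
  have hmono := integral_mono (integrable_const 2) (hpos.add hneg) fun ω ↦ by
    have := add_one_le_exp (s * X ω)
    have := add_one_le_exp (-s * X ω)
    change 2 ≤ exp (s * X ω) + exp (-s * X ω)
    linarith
  simpa using hmono

theorem measureReal_le_abs_le_exp_cgf [IsFiniteMeasure μ] {s : ℝ} (hs : 0 ≤ s) (ρ : ℝ)
    (hpos : Integrable (fun ω ↦ exp (s * X ω)) μ) (hneg : Integrable (fun ω ↦ exp (-s * X ω)) μ) :
    μ.real {ω | ρ ≤ |X ω|} ≤ exp (cgf X μ s - s * ρ) + exp (cgf X μ (-s) - s * ρ) := by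
  have hsub : {ω | ρ ≤ |X ω|} ⊆ {ω | ρ ≤ X ω} ∪ {ω | X ω ≤ -ρ} := fun ω hω ↦
    (le_abs'.1 (show ρ ≤ |X ω| from hω)).symm
  calc μ.real {ω | ρ ≤ |X ω|} ≤ μ.real {ω | ρ ≤ X ω} + μ.real {ω | X ω ≤ -ρ} :=
        (measureReal_mono hsub).trans (measureReal_union_le _ _)
    _ ≤ exp (-s * ρ + cgf X μ s) + exp (-(-s) * -ρ + cgf X μ (-s)) :=
        add_le_add (measure_ge_le_exp_cgf ρ hs hpos)
          (measure_le_le_exp_cgf (-ρ) (neg_nonpos.2 hs) hneg)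
    _ = exp (cgf X μ s - s * ρ) + exp (cgf X μ (-s) - s * ρ) := by ring_nf

theorem cgf_sub_const_tilted [IsProbabilityMeasure μ] {r s : ℝ} (x : ℝ)
    (hr : Integrable (fun ω ↦ exp (r * X ω)) μ) (hrs : Integrable (fun ω ↦ exp ((r + s) * X ω)) μ) :
    cgf (fun ω ↦ X ω - x) (μ.tilted (r * X ·)) s = cgf X μ (r + s) - cgf X μ r - s * x := by
  have hmgf : mgf (fun ω ↦ X ω - x) (μ.tilted (r * X ·)) s =
      mgf X μ (r + s) / mgf X μ r * exp (s * -x) := by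
    simp only [sub_eq_add_neg, mgf_add_const]
    simp only [mgf, integral_exp_tilted, Pi.add_apply, ← add_mul]
  have hr0 := mgf_pos hr
  have hrs0 := mgf_pos hrs
  rw [cgf, hmgf, log_mul (by positivity) (by positivity), log_div hrs0.ne' hr0.ne', log_exp]
  simp only [cgf]
  ring

theorem integrable_exp_mul_sub_const_tilted {r s : ℝ} (x : ℝ)
    (hr : Integrable (fun ω ↦ exp (r * X ω)) μ) (hrs : Integrable (fun ω ↦ exp ((r + s) * X ω)) μ) :
    Integrable (fun ω ↦ exp (s * (X ω - x))) (μ.tilted (r * X ·)) := by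
  rw [integrable_tilted_iff hr]
  refine (hrs.mul_const (exp (-(s * x)))).congr (Eventually.of_forall fun ω ↦ ?_)
  simp only [smul_eq_mul, ← exp_add]
  ring_nf

theorem tilted_measureReal_abs_sub_lt_le [IsFiniteMeasure μ] {s : ℝ} (x ρ : ℝ)
    (hs : Integrable (fun ω ↦ exp (s * X ω)) μ) :
    (μ.tilted (s * X ·)).real {ω | |X ω - x| < ρ} ≤
      exp (s * x + |s| * ρ - cgf X μ s) * μ.real {ω | |X ω - x| < ρ} := by
  set S := {ω | |X ω - x| < ρ}
  have hbound : ∀ ω ∈ S, s * X ω ≤ s * x + |s| * ρ := fun ω hω ↦ by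
    have : s * (X ω - x) ≤ |s| * ρ := (le_abs_self _).trans <| by
      rw [abs_mul]
      exact mul_le_mul_of_nonneg_left (le_of_lt hω) (abs_nonneg s)
    linarith
  have hmeas : μ.tilted (s * X ·) S ≤
      ENNReal.ofReal (exp (s * x + |s| * ρ - cgf X μ s)) * μ S := by
    rw [tilted_mul_apply_cgf S hs, ← setLIntegral_const]
    refine setLIntegral_mono measurable_const fun ω hω ↦ ENNReal.ofReal_le_ofReal ?_
    gcongr
    exact hbound ω hω
  have := ENNReal.toReal_mono (by finiteness) hmeas
  rwa [ENNReal.toReal_mul, ENNReal.toReal_ofReal (exp_pos _).le] at this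

end Chernoff

/-- The laws of `X t` under `μ t` have, in the large deviation regime of speed `1 / a t`, the
logarithmic moment generating functions of centered Gaussians of variance `c`, up to an error which
vanishes in the limit along `L`. -/
structure HasQuadraticCGFLimit {Ω : Type*} [MeasurableSpace Ω] (L : Filter ι) (a : ι → ℝ)
    (X : ι → Ω → ℝ) (μ : ι → Measure Ω) (c : ℝ) : Prop where
  isProbabilityMeasure : ∀ᶠ t in L, IsProbabilityMeasure (μ t)
  integrable_exp (l : ℝ) : ∀ᶠ t in L, Integrable (fun ω ↦ exp (l / a t * X t ω)) (μ t)
  tendsto_cgf (l : ℝ) : Tendsto (fun t ↦ a t * cgf (X t) (μ t) (l / a t)) L (𝓝 (c * l ^ 2 / 2))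

namespace HasQuadraticCGFLimit

variable {Ω : Type*} [MeasurableSpace Ω] {X : ι → Ω → ℝ} {μ : ι → Measure Ω} {c : ℝ}

theorem nonneg [L.NeBot] (h : HasQuadraticCGFLimit L a X μ c) (ha : Tendsto a L (𝓝[>] 0)) :
    0 ≤ c := by
  by_contra! hc
  have hcgf (l : ℝ) (hl : l ^ 2 = 1) : ∀ᶠ t in L, cgf (X t) (μ t) (l / a t) < 0 := by
    have hlim := h.tendsto_cgf l
    rw [hl] at hlim
    filter_upwards [hlim.eventually_lt_const (show c * 1 / 2 < 0 by linarith),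
      ha.eventually self_mem_nhdsWithin] with t ht hat
    exact neg_of_mul_neg_right ht (le_of_lt hat)
  obtain ⟨t, hμ, hpos, hneg, hlt, hlt'⟩ := (h.isProbabilityMeasure.and <|
    (h.integrable_exp 1).and <| (h.integrable_exp (-1)).and <|
      (hcgf 1 (by norm_num)).and (hcgf (-1) (by norm_num))).exists
  have hmgf {s : ℝ} (hs : Integrable (fun ω ↦ exp (s * X t ω)) (μ t))
      (hlt : cgf (X t) (μ t) s < 0) : mgf (X t) (μ t) s < 1 :=
    (log_neg_iff (mgf_pos hs)).1 hlt
  have htwo := two_le_mgf_add_mgf_neg hpos (by simpa only [neg_div] using hneg)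
  have hlt₁ := hmgf hpos hlt
  have hlt₂ := hmgf hneg hlt'
  rw [neg_div] at hlt₂
  linarith

theorem eventually_measureReal_le_abs_le (h : HasQuadraticCGFLimit L a X μ c)
    (ha : Tendsto a L (𝓝[>] 0)) {l r ρ : ℝ} (hl : 0 ≤ l) (hr : r < l * ρ - c * l ^ 2 / 2) :
    ∀ᶠ t in L, (μ t).real {ω | ρ ≤ |X t ω|} ≤ exp (-r / a t) := by
  obtain ⟨r', hrr', hr'⟩ := exists_between hr
  have hcgf (l' : ℝ) (hl' : l' ^ 2 = l ^ 2) :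
      ∀ᶠ t in L, a t * cgf (X t) (μ t) (l' / a t) < l * ρ - r' :=
    (h.tendsto_cgf l').eventually_lt_const (by rw [hl']; linarith)
  filter_upwards [h.isProbabilityMeasure, h.integrable_exp l, h.integrable_exp (-l), hcgf l rfl,
    hcgf (-l) (neg_sq l), ha.eventually self_mem_nhdsWithin,
    eventually_const_mul_exp_div_le ha 2 (neg_lt_neg hrr')] with t hμ hpos hneg hlt hlt' hat htwo
  replace hat : 0 < a t := hat
  have hexp {s : ℝ} (hs : a t * s < l * ρ - r') : exp (s - l / a t * ρ) ≤ exp (-r' / a t) := by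
    rw [exp_le_exp, le_div_iff₀ hat]
    have : (s - l / a t * ρ) * a t = a t * s - l * ρ := by field_simp
    linarith
  simp only [neg_div _ l] at hneg hlt'
  calc (μ t).real {ω | ρ ≤ |X t ω|}
      ≤ exp (cgf (X t) (μ t) (l / a t) - l / a t * ρ) +
        exp (cgf (X t) (μ t) (-(l / a t)) - l / a t * ρ) :=
        measureReal_le_abs_le_exp_cgf (by positivity) ρ hpos hneg
    _ ≤ exp (-r' / a t) + exp (-r' / a t) := add_le_add (hexp hlt) (hexp hlt')
    _ = 2 * exp (-r' / a t) := (two_mul _).symm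
    _ ≤ exp (-r / a t) := htwo

theorem tilted (h : HasQuadraticCGFLimit L a X μ c) (ha : Tendsto a L (𝓝[>] 0)) (l : ℝ) :
    HasQuadraticCGFLimit L a (fun t ω ↦ X t ω - c * l) (fun t ↦ (μ t).tilted (l / a t * X t ·))
      c where
  isProbabilityMeasure := by
    filter_upwards [h.isProbabilityMeasure, h.integrable_exp l] with t _ hl
    exact isProbabilityMeasure_tilted hl
  integrable_exp l' := by
    filter_upwards [h.integrable_exp l, h.integrable_exp (l + l')] with t hl hll'
    rw [add_div] at hll'
    exact integrable_exp_mul_sub_const_tilted (c * l) hl hll'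
  tendsto_cgf l' := by
    have hlim := ((h.tendsto_cgf (l + l')).sub (h.tendsto_cgf l)).sub_const (l' * (c * l))
    rw [show c * (l + l') ^ 2 / 2 - c * l ^ 2 / 2 - l' * (c * l) = c * l' ^ 2 / 2 by ring] at hlim
    refine hlim.congr' ?_
    filter_upwards [h.isProbabilityMeasure, h.integrable_exp l, h.integrable_exp (l + l'),
      ha.eventually self_mem_nhdsWithin] with t _ hl hll' hat
    have hat0 : a t ≠ 0 := ne_of_gt hat
    rw [add_div] at hll' ⊢
    rw [cgf_sub_const_tilted (c * l) hl hll']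
    field_simp

theorem eventually_half_le (h : HasQuadraticCGFLimit L a X μ c) (ha : Tendsto a L (𝓝[>] 0))
    (hc : 0 ≤ c) {ρ : ℝ} (hρ : 0 < ρ) : ∀ᶠ t in L, 1 / 2 ≤ (μ t).real {ω | |X t ω| < ρ} := by
  have hrate : ρ ^ 2 / (2 * (c + 1)) < ρ / (c + 1) * ρ - c * (ρ / (c + 1)) ^ 2 / 2 := by
    have : ρ / (c + 1) * ρ - c * (ρ / (c + 1)) ^ 2 / 2 - ρ ^ 2 / (2 * (c + 1)) =
        ρ ^ 2 / (2 * (c + 1) ^ 2) := by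
      field_simp
      ring
    linarith [show 0 < ρ ^ 2 / (2 * (c + 1) ^ 2) by positivity]
  have hneg : -(ρ ^ 2 / (2 * (c + 1))) < 0 := neg_neg_of_pos (by positivity)
  filter_upwards [h.isProbabilityMeasure, eventually_const_mul_exp_div_le ha 2 hneg,
    h.eventually_measureReal_le_abs_le ha (by positivity) hrate] with t _ htwo htail
  have hcover : {ω | |X t ω| < ρ} ∪ {ω | ρ ≤ |X t ω|} = Set.univ :=
    Set.eq_univ_of_forall fun ω ↦ lt_or_ge |X t ω| ρ
  have hunion := measureReal_union_le (μ := μ t) {ω | |X t ω| < ρ} {ω | ρ ≤ |X t ω|}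
  rw [hcover, probReal_univ] at hunion
  rw [zero_div, exp_zero] at htwo
  linarith

theorem eventually_exp_le (h : HasQuadraticCGFLimit L a X μ c) (ha : Tendsto a L (𝓝[>] 0))
    (hc : 0 ≤ c) {l r ε : ℝ} (hε : 0 < ε) (hr : r < -(c * l ^ 2 / 2)) :
    ∀ᶠ t in L, exp (r / a t) ≤ (μ t).real {ω | |X t ω - c * l| < ε} := by
  obtain ⟨ρ', hρ'0, hρ'⟩ := exists_pos_mul_lt (sub_pos.2 hr) |l|
  set ρ := min ε ρ'
  have hρ : |l| * ρ < -(c * l ^ 2 / 2) - r :=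
    (mul_le_mul_of_nonneg_left (min_le_right ε ρ') (abs_nonneg l)).trans_lt hρ'
  obtain ⟨y, hly, hyr⟩ := exists_between (show c * l ^ 2 / 2 + |l| * ρ < -r by linarith)
  filter_upwards [h.isProbabilityMeasure, h.integrable_exp l,
    (h.tendsto_cgf l).eventually_const_lt (show c * l ^ 2 + |l| * ρ - y < _ by linarith),
    (h.tilted ha l).eventually_half_le ha hc (lt_min hε hρ'0),
    eventually_const_mul_exp_div_le ha 2 (lt_neg_of_lt_neg hyr),
    ha.eventually self_mem_nhdsWithin] with t _ hl hcgf hhalf htwo hat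
  replace hat : 0 < a t := hat
  have hcost : l / a t * (c * l) + |l / a t| * ρ - cgf (X t) (μ t) (l / a t) ≤ y / a t := by
    rw [le_div_iff₀ hat, abs_div, abs_of_pos hat]
    have : (l / a t * (c * l) + |l| / a t * ρ - cgf (X t) (μ t) (l / a t)) * a t =
        c * l ^ 2 + |l| * ρ - a t * cgf (X t) (μ t) (l / a t) := by field_simp
    linarith
  have huntilt : 1 / 2 ≤ exp (y / a t) * (μ t).real {ω | |X t ω - c * l| < ρ} :=
    hhalf.trans <| (tilted_measureReal_abs_sub_lt_le (c * l) ρ hl).trans <| by gcongr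
  calc exp (r / a t) ≤ exp (-y / a t) * (1 / 2) := by linarith
    _ ≤ exp (-y / a t) * (exp (y / a t) * (μ t).real {ω | |X t ω - c * l| < ρ}) := by gcongr
    _ = (μ t).real {ω | |X t ω - c * l| < ρ} := by
      rw [← mul_assoc, ← exp_add, neg_div, neg_add_cancel, exp_zero, one_mul]
    _ ≤ (μ t).real {ω | |X t ω - c * l| < ε} :=
      measureReal_mono fun ω (hω : _ < ρ) ↦ hω.trans_le (min_le_left ε ρ')

theorem limsup_le (h : HasQuadraticCGFLimit L a X μ c) (ha : Tendsto a L (𝓝[>] 0)) (hc : 0 ≤ c)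
    {C : Set ℝ} (hC : IsClosed C) :
    limsup (fun t ↦ (a t : EReal) * elog ((μ t).real (X t ⁻¹' C))) L ≤
      -⨅ x ∈ C, tildeStar c x := by
  rcases C.eq_empty_or_nonempty with rfl | hne
  · refine limsup_le_of_le (by isBoundedDefault) ?_
    filter_upwards [ha.eventually self_mem_nhdsWithin] with t hat
    simp [elog, EReal.coe_mul_bot_of_pos hat]
  obtain ⟨x₀, hx₀, hmin⟩ := hC.exists_infDist_eq_dist hne 0
  have hsub : C ⊆ {x | |x₀| ≤ |x|} := fun x hx ↦ by
    have := Metric.infDist_le_dist_of_mem hx (x := 0)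
    rw [hmin] at this
    simpa using this
  refine le_trans ?_ (EReal.neg_le_neg_iff.2 (iInf₂_le x₀ hx₀))
  refine EReal.le_neg_of_le_neg (EReal.ge_of_forall_gt_iff_ge.1 fun r hr ↦ ?_)
  obtain ⟨l, hl, hrl⟩ := exists_lt_of_lt_tildeStar hc hr
  rw [EReal.le_neg, ← EReal.coe_neg]
  refine limsup_le_of_le (by isBoundedDefault) ?_
  filter_upwards [h.isProbabilityMeasure, ha.eventually self_mem_nhdsWithin,
    h.eventually_measureReal_le_abs_le ha hl hrl] with t _ hat htail
  have hle : (μ t).real (X t ⁻¹' C) ≤ (μ t).real {ω | |x₀| ≤ |X t ω|} :=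
    measureReal_mono (Set.preimage_mono hsub)
  exact mul_elog_le_of_le_exp hat (hle.trans htail)

theorem le_liminf (h : HasQuadraticCGFLimit L a X μ c) (ha : Tendsto a L (𝓝[>] 0)) (hc : 0 ≤ c)
    {O : Set ℝ} (hO : IsOpen O) :
    -⨅ x ∈ O, tildeStar c x ≤
      liminf (fun t ↦ (a t : EReal) * elog ((μ t).real (X t ⁻¹' O))) L := by
  rw [EReal.neg_le]
  refine le_iInf₂ fun x hxO ↦ ?_
  rw [EReal.neg_le]
  by_cases htop : tildeStar c x = ⊤
  · simp [htop]
  obtain ⟨l, rfl, hl⟩ := exists_eq_mul_of_tildeStar_ne_top hc htop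
  obtain ⟨ε, hε, hball⟩ := Metric.isOpen_iff.1 hO _ hxO
  rw [hl, ← EReal.coe_neg]
  refine EReal.ge_of_forall_gt_iff_ge.1 fun r hr ↦ ?_
  refine le_liminf_of_le (by isBoundedDefault) ?_
  filter_upwards [h.isProbabilityMeasure, ha.eventually self_mem_nhdsWithin,
    h.eventually_exp_le ha hc hε (EReal.coe_lt_coe_iff.1 hr)] with t _ hat hexp
  exact le_mul_elog_of_exp_le hat (hexp.trans (measureReal_mono fun ω hω ↦ hball hω))

theorem largeDeviationPrinciple [L.NeBot] (h : HasQuadraticCGFLimit L a X μ c)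
    (ha : Tendsto a L (𝓝[>] 0)) :
    LargeDeviationPrinciple_s7 L a (fun t S ↦ (μ t).real (X t ⁻¹' S)) (tildeStar c) where
  lowerSemicontinuous := lowerSemicontinuous_tildeStar c
  isCompact_sublevel := isCompact_tildeStar_le c
  limsup_le _ := h.limsup_le ha (h.nonneg ha)
  le_liminf _ := h.le_liminf ha (h.nonneg ha)

end HasQuadraticCGFLimit

end LargeDeviations

section WeightMeasure

open MeasureTheory ProbabilityTheory Real

variable {κ : Type*} [MeasurableSpace κ] {p : κ → ℝ}

/-- The measure on a countable space with the (nonnegative) point masses `p k`. -/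
noncomputable def weightMeasure (p : κ → ℝ) : Measure κ :=
  Measure.sum fun k ↦ ENNReal.ofReal (p k) • Measure.dirac k

theorem isProbabilityMeasure_weightMeasure_div (hp : ∀ k, 0 ≤ p k) (hsum : 0 < ∑' k, p k) :
    IsProbabilityMeasure (weightMeasure fun k ↦ p k / ∑' j, p j) := by
  have hp_sum : Summable p := of_not_not (mt tsum_eq_zero_of_not_summable hsum.ne')
  have hone := hp_sum.hasSum.div_const (∑' k, p k)
  rw [div_self hsum.ne'] at hone
  exact hone.isProbabilityMeasure_sum_dirac fun k ↦ div_nonneg (hp k) hsum.le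

variable [Countable κ] [MeasurableSingletonClass κ]

theorem integrable_weightMeasure_iff (hp : ∀ k, 0 ≤ p k) {f : κ → ℝ} :
    Integrable f (weightMeasure p) ↔ Summable fun k ↦ p k * ‖f k‖ := by
  rw [weightMeasure, integrable_sum_dirac_iff fun _ ↦ ENNReal.ofReal_ne_top]
  simp only [fun k ↦ ENNReal.toReal_ofReal (hp k)]

theorem integral_weightMeasure (hp : ∀ k, 0 ≤ p k) (f : κ → ℝ) :
    ∫ k, f k ∂weightMeasure p = ∑' k, p k * f k := by
  rw [weightMeasure, integral_sum_dirac fun _ ↦ ENNReal.ofReal_ne_top]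
  simp only [fun k ↦ ENNReal.toReal_ofReal (hp k), smul_eq_mul]

theorem weightMeasure_real_apply (hp : ∀ k, 0 ≤ p k) (S : Set κ) :
    (weightMeasure p).real S = ∑' k, S.indicator p k := by
  rw [← integral_indicator_one S.to_countable.measurableSet, integral_weightMeasure hp]
  refine tsum_congr fun k ↦ ?_
  by_cases hk : k ∈ S <;> simp [hk]

end WeightMeasure

section Asymptotics

open Asymptotics Real

variable {ι : Type*} {L : Filter ι}

theorem tendsto_log_sub_log_of_isEquivalent_s7 {f g : ι → ℝ} (h : f ~[L] g)
    (hg : ∀ᶠ t in L, g t ≠ 0) : Tendsto (fun t ↦ log (f t) - log (g t)) L (𝓝 0) := by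
  have hdiv : Tendsto (f / g) L (𝓝 1) := (isEquivalent_iff_tendsto_one hg).1 h
  have hlog := hdiv.log one_ne_zero
  rw [log_one] at hlog
  refine hlog.congr' ?_
  filter_upwards [hg, hdiv.eventually_ne one_ne_zero] with t hgt ht
  exact log_div (div_ne_zero_iff.1 ht).1 hgt

theorem isBigO_one_of_exists_abs_le {f : ℝ → ℝ} (h : ∃ M, ∀ t, 0 < t → |f t| ≤ M) :
    f =O[atTop] fun _ ↦ (1 : ℝ) := by
  obtain ⟨M, hM⟩ := h
  refine IsBigO.of_bound M ((eventually_gt_atTop 0).mono fun t ht ↦ ?_)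
  rw [norm_one, mul_one]
  exact hM t ht

theorem isBigO_sqrt_of_normalized {V p q m : ι → ℝ} {κ : ℝ} (hV : ∀ᶠ t in L, 0 < V t)
    (hκ : (fun t ↦ √(V t) * (κ - p t / (V t * q t))) =O[L] fun _ ↦ (1 : ℝ))
    (hm : (fun t ↦ (√(V t))⁻¹ * (p t / q t - m t)) =O[L] fun _ ↦ (1 : ℝ)) :
    (fun t ↦ V t * κ - m t) =O[L] fun t ↦ √(V t) := by
  refine ((isBigO_refl (fun t ↦ √(V t)) L).mul (hκ.add hm)).congr' ?_ (by simp)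
  filter_upwards [hV] with t ht
  have hsqrt := sqrt_pos.2 ht
  rw [mul_add, ← mul_assoc, mul_self_sqrt ht.le, mul_inv_cancel_left₀ hsqrt.ne', mul_sub,
    div_mul_eq_div_div_swap, mul_div_cancel₀ _ ht.ne']
  ring

theorem isLittleO_sub_taylor_two {f f' : ℝ → ℝ} {x₀ c : ℝ}
    (hf : ∀ᶠ x in 𝓝 x₀, HasDerivAt f (f' x) x) (hf' : HasDerivAt f' c x₀) :
    (fun x ↦ f x - (f x₀ + (x - x₀) * f' x₀ + c * (x - x₀) ^ 2 / 2)) =o[𝓝 x₀]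
      fun x ↦ (x - x₀) ^ 2 := by
  obtain ⟨ε, hε, hball⟩ := Metric.eventually_nhds_iff_ball.1 hf
  have hrem : ∀ x ∈ Metric.ball x₀ ε,
      HasDerivWithinAt (fun x ↦ f x - (f x₀ + (x - x₀) * f' x₀ + c * (x - x₀) ^ 2 / 2))
        (f' x - f' x₀ - (x - x₀) • c) (Metric.ball x₀ ε) x := fun x hx ↦ by
    have hid : HasDerivAt (fun x ↦ x - x₀) 1 x := (hasDerivAt_id x).sub_const x₀
    convert! ((hball x hx).sub (((hid.mul_const (f' x₀)).const_add (f x₀)).add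
      (((hid.pow 2).const_mul c).div_const 2))).hasDerivWithinAt using 1
    simp only [smul_eq_mul]
    ring
  have hderiv : (fun x ↦ f' x - f' x₀ - (x - x₀) • c) =o[𝓝[Metric.ball x₀ ε] x₀]
      fun x ↦ (x - x₀) ^ 1 := by
    simpa only [pow_one] using hf'.isLittleO.mono nhdsWithin_le_nhds
  have := (convex_ball x₀ ε).isLittleO_pow_succ_real (Metric.mem_ball_self hε) hrem hderiv
  rw [nhdsWithin_eq_nhds.2 (Metric.ball_mem_nhds x₀ hε)] at this
  simpa using this

theorem tendsto_mul_of_isBigO_sub_quadratic {a V m F : ι → ℝ} {Λ : ℝ → ℝ} {κ c l : ℝ}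
    (ha : Tendsto a L (𝓝[>] 0)) (hVa : Tendsto (fun t ↦ V t * a t) L atTop)
    (hΛ : (fun s ↦ Λ s - (s * κ + c * s ^ 2 / 2)) =o[𝓝 0] fun s ↦ s ^ 2)
    (hm : (fun t ↦ V t * κ - m t) =O[L] fun t ↦ √(V t))
    (hF : (fun t ↦ F t - (V t * Λ (l / √(V t * a t)) - l / √(V t * a t) * m t)) =O[L]
      fun _ ↦ (1 : ℝ)) :
    Tendsto (fun t ↦ a t * F t) L (𝓝 (c * l ^ 2 / 2)) := by
  set θ : ι → ℝ := fun t ↦ l / √(V t * a t) with hθ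
  have hθ0 : Tendsto θ L (𝓝 0) :=
    (tendsto_sqrt_atTop.comp hVa).const_div_atTop l
  have ha0 : Tendsto a L (𝓝 0) := ha.mono_right nhdsWithin_le_nhds
  have hVaθ : ∀ᶠ t in L, V t * a t * θ t ^ 2 = l ^ 2 := by
    filter_upwards [hVa.eventually_gt_atTop 0] with t ht
    rw [hθ, div_pow, sq_sqrt ht.le]
    exact mul_div_cancel₀ _ ht.ne'
  have hbounded : Tendsto (fun t ↦ a t * (F t - (V t * Λ (θ t) - θ t * m t))) L (𝓝 0) := by
    have := (isBigO_refl a L).mul hF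
    simp only [mul_one] at this
    exact this.trans_tendsto ha0
  have htaylor : Tendsto (fun t ↦ V t * a t * (Λ (θ t) - (θ t * κ + c * θ t ^ 2 / 2))) L (𝓝 0) := by
    have := (isBigO_refl (fun t ↦ V t * a t) L).mul_isLittleO (hΛ.comp_tendsto hθ0)
    exact (isLittleO_one_iff ℝ).1 <|
      (this.congr' .rfl hVaθ).trans_isBigO (isBigO_const_const _ one_ne_zero L)
  have hmean : Tendsto (fun t ↦ a t * θ t * (V t * κ - m t)) L (𝓝 0) := by
    have hsqrt : Tendsto (fun t ↦ l * √(a t)) L (𝓝 0) := by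
      simpa using (ha0.sqrt.const_mul l)
    refine ((isBigO_refl (fun t ↦ a t * θ t) L).mul hm).trans_tendsto (hsqrt.congr' ?_)
    filter_upwards [hVa.eventually_gt_atTop 0, ha.eventually self_mem_nhdsWithin] with t hVat hat
    have hVt : 0 < V t := pos_of_mul_pos_left hVat (le_of_lt hat)
    have := sqrt_pos.2 hVt
    have := sqrt_pos.2 hat
    simp only [hθ, sqrt_mul hVt.le]
    field_simp
    rw [sq_sqrt (le_of_lt hat)]
  have hsum := ((hbounded.add htaylor).add hmean).add_const (c * l ^ 2 / 2)
  simp only [zero_add] at hsum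
  refine hsum.congr' ?_
  filter_upwards [hVaθ] with t ht
  rw [← ht]
  ring

end Asymptotics

section PowerSeriesLaw

open Asymptotics Real

/-- The generating function `∑ k, w k * u ^ k` of the weights `w`. -/
noncomputable def genFun (w : ℕ → ℝ) (u : ℝ) : ℝ := ∑' k, w k * u ^ k

/-- The power series distribution with coefficients `b` and parameter `x`: the probability that it
assigns to `k`. -/
noncomputable def powerSeriesLaw (b : ℕ → ℝ) (x : ℝ) (k : ℕ) : ℝ := b k * x ^ k / genFun b x

theorem genFun_one (w : ℕ → ℝ) : genFun w 1 = ∑' k, w k := by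
  simp only [genFun, one_pow, mul_one]

variable {b : ℕ → ℝ}

theorem genFun_pos {y : ℝ} (hb : ∀ k, 0 ≤ b k) (hpos : ∃ k, 0 < b k)
    (hsum : Summable fun k ↦ b k * y ^ k) (hy : 0 < y) : 0 < genFun b y := by
  obtain ⟨k, hk⟩ := hpos
  exact hsum.tsum_pos (fun j ↦ mul_nonneg (hb j) (pow_nonneg hy.le j)) k (by positivity)

theorem hasSum_powerSeriesLaw_mul_pow {x u : ℝ} (hsum : Summable fun k ↦ b k * (u * x) ^ k) :
    HasSum (fun k ↦ powerSeriesLaw b x k * u ^ k) (genFun b (u * x) / genFun b x) := by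
  convert! hsum.hasSum.div_const (genFun b x) using 2 with k
  rw [powerSeriesLaw, mul_pow]
  ring

theorem pow_isLittleO_genFun (hb : ∀ k, 0 ≤ b k) (hfreq : ∃ᶠ k in atTop, 0 < b k)
    (hsum : ∀ y, 0 < y → Summable fun k ↦ b k * y ^ k) (k : ℕ) :
    (fun y ↦ y ^ k) =o[atTop] genFun b := by
  obtain ⟨K, hkK, hK⟩ := (frequently_atTop'.1 hfreq) k
  refine (isLittleO_pow_pow_atTop_of_lt hkK).trans_isBigO (IsBigO.of_bound (b K)⁻¹ ?_)
  filter_upwards [eventually_gt_atTop 0] with y hy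
  have hle : b K * y ^ K ≤ genFun b y :=
    (hsum y hy).le_tsum K fun j _ ↦ mul_nonneg (hb j) (pow_nonneg hy.le j)
  rw [norm_of_nonneg (by positivity), le_inv_mul_iff₀ hK]
  exact hle.trans (le_abs_self _)

variable {ι : Type*} {L : Filter ι} {n : ℕ} {x u : ι → ℝ} {w : ι → ℕ → ℝ}

/-- Weights `w t` on `ℕ` which from the index `n` on are those of the power series distribution
with coefficients `b` and parameter `x t`, where `x t → ∞`, while each of the first `n` weights
is at most of the order of the corresponding weight of that distribution. -/
structure EventuallyPowerSeriesLaw (L : Filter ι) (n : ℕ) (b : ℕ → ℝ) (x : ι → ℝ)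
    (w : ι → ℕ → ℝ) : Prop where
  coeff_nonneg (k : ℕ) : 0 ≤ b k
  coeff_frequently_pos : ∃ᶠ k in atTop, 0 < b k
  coeff_summable (y : ℝ) : 0 < y → Summable fun k ↦ b k * y ^ k
  tendsto_param : Tendsto x L atTop
  weight_nonneg : ∀ᶠ t in L, ∀ k, 0 ≤ w t k
  weight_head (k : ℕ) : k < n → (fun t ↦ w t k) =O[L] fun t ↦ powerSeriesLaw b (x t) k
  weight_tail : ∀ᶠ t in L, ∀ k, n ≤ k → w t k = powerSeriesLaw b (x t) k

namespace EventuallyPowerSeriesLaw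

theorem genFun_coeff_pos (h : EventuallyPowerSeriesLaw L n b x w) {y : ℝ} (hy : 0 < y) :
    0 < genFun b y :=
  genFun_pos h.coeff_nonneg h.coeff_frequently_pos.exists (h.coeff_summable y hy) hy

theorem tendsto_mul_param (h : EventuallyPowerSeriesLaw L n b x w) (hu : Tendsto u L (𝓝 1)) :
    Tendsto (fun t ↦ u t * x t) L atTop :=
  hu.pos_mul_atTop one_pos h.tendsto_param

theorem powerSeriesLaw_mul_pow_isLittleO (h : EventuallyPowerSeriesLaw L n b x w)
    (hu : Tendsto u L (𝓝 1)) (k : ℕ) :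
    (fun t ↦ powerSeriesLaw b (x t) k * u t ^ k) =o[L]
      fun t ↦ genFun b (u t * x t) / genFun b (x t) := by
  have hpow := (pow_isLittleO_genFun h.coeff_nonneg h.coeff_frequently_pos h.coeff_summable
    k).comp_tendsto (h.tendsto_mul_param hu)
  refine ((hpow.const_mul_left (b k)).mul_isBigO
    (isBigO_refl (fun t ↦ (genFun b (x t))⁻¹) L)).congr_left fun t ↦ ?_
  simp only [Function.comp_apply, powerSeriesLaw]
  ring

theorem eventually_hasSum (h : EventuallyPowerSeriesLaw L n b x w) (hu : Tendsto u L (𝓝 1)) :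
    ∀ᶠ t in L, HasSum (fun k ↦ w t k * u t ^ k)
      (∑ k ∈ Finset.range n, (w t k * u t ^ k - powerSeriesLaw b (x t) k * u t ^ k) +
        genFun b (u t * x t) / genFun b (x t)) := by
  filter_upwards [h.weight_tail, (h.tendsto_mul_param hu).eventually_gt_atTop 0] with t htail hux
  have hlaw := hasSum_powerSeriesLaw_mul_pow (h.coeff_summable _ hux)
  have hdiff : HasSum (fun k ↦ w t k * u t ^ k - powerSeriesLaw b (x t) k * u t ^ k)
      (∑ k ∈ Finset.range n, (w t k * u t ^ k - powerSeriesLaw b (x t) k * u t ^ k)) := by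
    refine hasSum_sum_of_ne_finset_zero fun k hk ↦ ?_
    rw [htail k (by simpa using hk), sub_self]
  simpa only [sub_add_cancel] using hdiff.add hlaw

theorem isEquivalent_genFun (h : EventuallyPowerSeriesLaw L n b x w) (hu : Tendsto u L (𝓝 1)) :
    (fun t ↦ genFun (w t) (u t)) ~[L] fun t ↦ genFun b (u t * x t) / genFun b (x t) := by
  have hhead : (fun t ↦ ∑ k ∈ Finset.range n,
      (w t k * u t ^ k - powerSeriesLaw b (x t) k * u t ^ k)) =o[L]
      fun t ↦ genFun b (u t * x t) / genFun b (x t) := by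
    refine IsLittleO.fun_sum fun k hk ↦ ?_
    have hlaw := h.powerSeriesLaw_mul_pow_isLittleO hu k
    have hweight := (h.weight_head k (Finset.mem_range.1 hk)).mul
      (isBigO_refl (fun t ↦ u t ^ k) L)
    exact (hweight.trans_isLittleO hlaw).sub hlaw
  refine hhead.congr' ?_ .rfl
  filter_upwards [h.eventually_hasSum hu] with t ht
  rw [Pi.sub_apply, genFun, ht.tsum_eq, add_sub_cancel_right]

theorem tendsto_log_genFun_sub (h : EventuallyPowerSeriesLaw L n b x w)
    (hu : Tendsto u L (𝓝 1)) :
    Tendsto (fun t ↦ log (genFun (w t) (u t)) - log (genFun b (u t * x t) / genFun b (x t))) L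
      (𝓝 0) := by
  refine tendsto_log_sub_log_of_isEquivalent_s7 (h.isEquivalent_genFun hu) ?_
  filter_upwards [h.tendsto_param.eventually_gt_atTop 0,
    (h.tendsto_mul_param hu).eventually_gt_atTop 0] with t hx hux
  exact (div_pos (h.genFun_coeff_pos hux) (h.genFun_coeff_pos hx)).ne'

theorem eventually_genFun_pos (h : EventuallyPowerSeriesLaw L n b x w)
    (hu : Tendsto u L (𝓝 1)) : ∀ᶠ t in L, 0 < genFun (w t) (u t) := by
  obtain ⟨k, hnk, hk⟩ := (frequently_atTop.1 h.coeff_frequently_pos) n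
  filter_upwards [h.weight_nonneg, h.weight_tail, h.eventually_hasSum hu,
    h.tendsto_param.eventually_gt_atTop 0, hu.eventually_const_lt one_pos]
    with t hnonneg htail hsum hx hu0
  refine genFun_pos hnonneg ⟨k, ?_⟩ hsum.summable hu0
  rw [htail k hnk, powerSeriesLaw]
  have := h.genFun_coeff_pos hx
  positivity

theorem log_genFun_exp_sub_isBigO (h : EventuallyPowerSeriesLaw L n b x w) {V θ : ι → ℝ}
    {Λ : ℝ → ℝ} (hθ : Tendsto θ L (𝓝 0))
    (hΛ : (fun t ↦ log (genFun b (exp (θ t) * x t) / genFun b (x t)) - V t * Λ (θ t)) =O[L]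
      fun _ ↦ (1 : ℝ)) :
    (fun t ↦ log (genFun (w t) (exp (θ t))) - log (∑' k, w t k) - V t * Λ (θ t)) =O[L]
      fun _ ↦ (1 : ℝ) := by
  have hexp : Tendsto (fun t ↦ exp (θ t)) L (𝓝 1) := by simpa using hθ.rexp
  have htilt := (h.tendsto_log_genFun_sub hexp).isBigO_one ℝ
  have hnorm := (h.tendsto_log_genFun_sub tendsto_const_nhds).isBigO_one ℝ
  refine ((htilt.add hΛ).sub hnorm).congr' ?_ .rfl
  filter_upwards [h.tendsto_param.eventually_gt_atTop 0] with t hx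
  rw [one_mul, div_self (h.genFun_coeff_pos hx).ne', log_one, genFun_one]
  ring

end EventuallyPowerSeriesLaw

namespace PSCond

variable {n : ℕ} {d : ℕ → ℕ → ℝ} {δf : ℕ → ℝ → ℝ} {v Δ : ℝ → ℝ}

theorem eventuallyPowerSeriesLaw (h : PSCond n d δf v Δ) :
    EventuallyPowerSeriesLaw atTop n (d · n) (δf n)
      (fun t k ↦ d k k * δf k t ^ k / Dser d k (δf k t)) where
  coeff_nonneg k := h.d_nonneg k n
  coeff_frequently_pos := frequently_atTop.2 fun N ↦ by
    obtain ⟨k, hk, hpos⟩ := h.B2 (max N n)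
    exact ⟨k, (le_max_left N n).trans hk, h.B1_d k ((le_max_right N n).trans hk) k ▸ hpos⟩
  coeff_summable := h.D_summable n
  tendsto_param := h.delta_tendsto n
  weight_nonneg := by
    filter_upwards [eventually_gt_atTop 0] with t ht k
    have hδ := h.delta_pos k t ht
    exact div_nonneg (mul_nonneg (h.d_nonneg k k) (pow_nonneg hδ.le k)) (h.D_pos k _ hδ).le
  weight_head k hk := by
    rcases (h.d_nonneg k n).eq_or_lt' with hzero | hpos
    · simpa only [h.B3_zero k hk hzero, zero_mul, zero_div] using isBigO_zero _ _
    · refine (isLittleO_of_tendsto' ?_ (h.B3_lim k hk hpos)).isBigO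
      filter_upwards [eventually_gt_atTop 0] with t ht hlaw
      have hδ := h.delta_pos n t ht
      exact absurd hlaw (div_pos (mul_pos hpos (pow_pos hδ k)) (h.D_pos n _ hδ)).ne'
  weight_tail := Eventually.of_forall fun t k hk ↦ by
    simp only [powerSeriesLaw, genFun, Dser, h.B1_d k hk, h.B1_delta k hk]

theorem eventually_v_pos (h : PSCond n d δf v Δ) : ∀ᶠ t in atTop, 0 < v (δf n t) :=
  (h.v_tendsto.comp (h.delta_tendsto n)).eventually_gt_atTop 0

end PSCond

end PowerSeriesLaw

section Lam

open Real

theorem hasDerivAt_Lam {Δ : ℝ → ℝ} {s : ℝ} (h : DifferentiableAt ℝ Δ (exp s)) :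
    HasDerivAt (Lam Δ) (deriv Δ (exp s) * exp s) s :=
  (h.hasDerivAt.comp s (hasDerivAt_exp s)).sub_const _

theorem Lam_sub_quadratic_isLittleO {Δ : ℝ → ℝ} (h : ∀ u, 0 < u → DifferentiableAt ℝ Δ u)
    (h' : DifferentiableAt ℝ (deriv Δ) 1) :
    (fun s ↦ Lam Δ s - (s * deriv (Lam Δ) 0 + deriv (deriv (Lam Δ)) 0 * s ^ 2 / 2)) =o[𝓝 0]
      fun s ↦ s ^ 2 := by
  have hLam (s : ℝ) := hasDerivAt_Lam (h _ (exp_pos s))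
  have hderiv : deriv (Lam Δ) = fun s ↦ deriv Δ (exp s) * exp s := deriv_eq hLam
  have hdiff : DifferentiableAt ℝ (deriv (Lam Δ)) 0 := by
    rw [hderiv]
    refine DifferentiableAt.mul (DifferentiableAt.comp (g := deriv Δ) 0 ?_ differentiableAt_exp)
      differentiableAt_exp
    rwa [exp_zero]
  have hzero : Lam Δ 0 = 0 := by rw [Lam, exp_zero, sub_self]
  simpa only [sub_zero, hzero, zero_add] using isLittleO_sub_taylor_two
    (Eventually.of_forall fun s ↦ (hLam s).differentiableAt.hasDerivAt) hdiff.hasDerivAt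

end Lam

section NormalizedWeights

open MeasureTheory ProbabilityTheory Real

variable {w : ℕ → ℝ} {s σ : ℝ}

theorem exp_mul_sub_mul (s m σ : ℝ) (k : ℕ) :
    exp (s * ((k - m) * σ)) = exp (-(s * σ * m)) * exp (s * σ) ^ k := by
  rw [← exp_nat_mul, ← exp_add]
  ring_nf

theorem integrable_exp_mul_weightMeasure_div (hw : ∀ k, 0 ≤ w k) (m : ℝ)
    (hsum : Summable fun k ↦ w k * exp (s * σ) ^ k) :
    Integrable (fun k : ℕ ↦ exp (s * ((k - m) * σ))) (weightMeasure fun k ↦ w k / ∑' j, w j) := by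
  rw [integrable_weightMeasure_iff fun k ↦ div_nonneg (hw k) (tsum_nonneg hw)]
  refine (hsum.mul_left (exp (-(s * σ * m)) / ∑' j, w j)).congr fun k ↦ ?_
  rw [norm_of_nonneg (exp_pos _).le, exp_mul_sub_mul]
  ring

theorem cgf_weightMeasure_div (hw : ∀ k, 0 ≤ w k) (hZ : 0 < ∑' k, w k) (m : ℝ)
    (hpos : 0 < genFun w (exp (s * σ))) :
    cgf (fun k : ℕ ↦ (k - m) * σ) (weightMeasure fun k ↦ w k / ∑' j, w j) s =
      log (genFun w (exp (s * σ))) - log (∑' k, w k) - s * σ * m := by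
  have hmgf : mgf (fun k : ℕ ↦ (k - m) * σ) (weightMeasure fun k ↦ w k / ∑' j, w j) s =
      exp (-(s * σ * m)) * (genFun w (exp (s * σ)) / ∑' k, w k) := by
    rw [mgf, integral_weightMeasure fun k ↦ div_nonneg (hw k) hZ.le, genFun, ← tsum_div_const,
      ← tsum_mul_left]
    refine tsum_congr fun k ↦ ?_
    rw [exp_mul_sub_mul]
    ring
  rw [cgf, hmgf, log_mul (exp_ne_zero _) (div_pos hpos hZ).ne', log_exp, log_div hpos.ne' hZ.ne']
  ring

end NormalizedWeights

section ModerateDeviations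

open Asymptotics Real

variable {ι : Type*} {L : Filter ι} {n : ℕ} {b : ℕ → ℝ} {x a V m : ι → ℝ} {w : ι → ℕ → ℝ}
  {Λ : ℝ → ℝ} {κ c : ℝ}

theorem EventuallyPowerSeriesLaw.hasQuadraticCGFLimit (h : EventuallyPowerSeriesLaw L n b x w)
    (ha : Tendsto a L (𝓝[>] 0)) (hVa : Tendsto (fun t ↦ V t * a t) L atTop)
    (hΛ : (fun s ↦ Λ s - (s * κ + c * s ^ 2 / 2)) =o[𝓝 0] fun s ↦ s ^ 2)
    (hlog : ∀ θ : ι → ℝ, Tendsto θ L (𝓝 0) →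
      (fun t ↦ log (genFun b (exp (θ t) * x t) / genFun b (x t)) - V t * Λ (θ t)) =O[L]
        fun _ ↦ (1 : ℝ))
    (hm : (fun t ↦ V t * κ - m t) =O[L] fun t ↦ √(V t)) :
    HasQuadraticCGFLimit L a (fun t (k : ℕ) ↦ (k - m t) * √(V t * a t) / V t)
      (fun t ↦ weightMeasure fun k ↦ w t k / ∑' j, w t j) c := by
  have hscale (l : ℝ) : ∀ᶠ t in L, l / a t * (√(V t * a t) / V t) = l / √(V t * a t) := by
    filter_upwards [hVa.eventually_gt_atTop 0, ha.eventually self_mem_nhdsWithin] with t hVat hat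
    have hVt : 0 < V t := pos_of_mul_pos_left hVat (le_of_lt hat)
    rw [div_mul_div_comm, div_eq_div_iff (by positivity) (sqrt_ne_zero'.2 hVat), mul_assoc,
      mul_self_sqrt hVat.le, mul_comm (V t)]
  have hθ (l : ℝ) : Tendsto (fun t ↦ l / √(V t * a t)) L (𝓝 0) :=
    (tendsto_sqrt_atTop.comp hVa).const_div_atTop l
  have hexp (l : ℝ) : Tendsto (fun t ↦ exp (l / √(V t * a t))) L (𝓝 1) := by
    simpa using (hθ l).rexp
  simp only [mul_div_assoc]
  refine ⟨?_, fun l ↦ ?_, fun l ↦ ?_⟩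
  · filter_upwards [h.weight_nonneg, h.eventually_genFun_pos tendsto_const_nhds] with t hw hZ
    rw [genFun_one] at hZ
    exact isProbabilityMeasure_weightMeasure_div hw hZ
  · filter_upwards [h.weight_nonneg, h.eventually_hasSum (hexp l), hscale l] with t hw hsum hs
    exact integrable_exp_mul_weightMeasure_div hw (m t) (by rw [hs]; exact hsum.summable)
  · refine tendsto_mul_of_isBigO_sub_quadratic ha hVa hΛ hm ?_
    refine (h.log_genFun_exp_sub_isBigO (hθ l) (hlog _ (hθ l))).congr' ?_ .rfl
    filter_upwards [h.weight_nonneg, h.eventually_genFun_pos (hexp l),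
      h.eventually_genFun_pos tendsto_const_nhds, hscale l] with t hw hpos hZ hs
    rw [genFun_one] at hZ
    rw [cgf_weightMeasure_div hw hZ (m t) (by rwa [hs]), hs]
    ring

theorem prop_MD_eventually_constant_general [L.NeBot] (h : EventuallyPowerSeriesLaw L n b x w)
    (ha : Tendsto a L (𝓝[>] 0)) (hVa : Tendsto (fun t ↦ V t * a t) L atTop)
    (hΛ : (fun s ↦ Λ s - (s * κ + c * s ^ 2 / 2)) =o[𝓝 0] fun s ↦ s ^ 2)
    (hlog : ∀ θ : ι → ℝ, Tendsto θ L (𝓝 0) →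
      (fun t ↦ log (genFun b (exp (θ t) * x t) / genFun b (x t)) - V t * Λ (θ t)) =O[L]
        fun _ ↦ (1 : ℝ))
    (hm : (fun t ↦ V t * κ - m t) =O[L] fun t ↦ √(V t)) :
    LargeDeviationPrinciple_s7 L a
      (fun t S ↦ ∑' k : ℕ, S.indicator (fun _ ↦ w t k / ∑' j, w t j)
        ((k - m t) * √(V t * a t) / V t))
      (tildeStar c) := by
  refine ((h.hasQuadraticCGFLimit ha hVa hΛ hlog hm).largeDeviationPrinciple ha).congr ?_
  filter_upwards [h.weight_nonneg] with t hw
  funext S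
  exact weightMeasure_real_apply (fun k ↦ div_nonneg (hw k) (tsum_nonneg hw)) _

end ModerateDeviations

/-- Proposition 3.2 (moderate deviations): under Conditions (B1), (B2), (B3), twice
differentiability of `Δ` at `1`, and the boundedness hypotheses on `H1`, `H2`, `H3`,
for every family `a(t) > 0` with `a(t) → 0` and `v(δ(t))a(t) → ∞`, the centered and rescaled
family satisfies the LDP with speed `1/a(t)` and good rate function `Λ̃*`. -/
theorem prop_MD_eventually_constant
    (n : ℕ) (d : ℕ → ℕ → ℝ) (δf : ℕ → ℝ → ℝ) (v Δ : ℝ → ℝ)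
    (hcond : PSCond n d δf v Δ)
    (hZsum : ∀ t : ℝ, 0 < t →
      Summable (fun j : ℕ => d j j * (δf j t) ^ j / Dser d j (δf j t)))
    (hZpos : ∀ t : ℝ, 0 < t → 0 < Znorm d δf t)
    -- `Δ` is twice differentiable at `1` (so `Λ''(0)` exists)
    (hDelta'' : DifferentiableAt ℝ (deriv Δ) 1)
    -- hypothesis (i): `H1(t)` is bounded whenever `u(t) → 1`
    (hH1 : ∀ u : ℝ → ℝ, (∀ t : ℝ, 0 < t → 0 < u t) → Tendsto u atTop (𝓝 1) →
      ∃ M : ℝ, ∀ t : ℝ, 0 < t →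
        |Real.log (Dser d n (u t * δf n t) / Dser d n (δf n t))
          - v (δf n t) * (Δ (u t) - Δ 1)| ≤ M)
    -- hypothesis (ii): `H2(t)` is bounded
    (hH2 : ∃ M : ℝ, ∀ t : ℝ, 0 < t →
      |Real.sqrt (v (δf n t)) * (deriv (Lam Δ) 0
        - δf n t * deriv (Dser d n) (δf n t) / (v (δf n t) * Dser d n (δf n t)))| ≤ M)
    -- hypothesis (iii): `H3(t)` is bounded
    (hH3 : ∃ M : ℝ, ∀ t : ℝ, 0 < t →
      |(Real.sqrt (v (δf n t)))⁻¹ *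
        (δf n t * deriv (Dser d n) (δf n t) / Dser d n (δf n t) - meanN d δf t)| ≤ M)
    (a : ℝ → ℝ) (ha_pos : ∀ t : ℝ, 0 < t → 0 < a t)
    (ha0 : Tendsto a atTop (𝓝 0))
    (hva : Tendsto (fun t : ℝ => v (δf n t) * a t) atTop atTop) :
    LowerSemicontinuous (tildeStar (deriv (deriv (Lam Δ)) 0)) ∧
    (∀ η : ℝ, 0 ≤ η →
      IsCompact {x : ℝ | tildeStar (deriv (deriv (Lam Δ)) 0) x ≤ (η : EReal)}) ∧
    (∀ C : Set ℝ, IsClosed C →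
      Filter.limsup (fun t : ℝ => ((a t : ℝ) : EReal) * elog (probMD n d δf v a t C)) atTop
        ≤ - ⨅ x ∈ C, tildeStar (deriv (deriv (Lam Δ)) 0) x) ∧
    (∀ O : Set ℝ, IsOpen O →
      - ⨅ x ∈ O, tildeStar (deriv (deriv (Lam Δ)) 0) x ≤
        Filter.liminf
          (fun t : ℝ => ((a t : ℝ) : EReal) * elog (probMD n d δf v a t O)) atTop) := by
  have h := prop_MD_eventually_constant_general hcond.eventuallyPowerSeriesLaw
    (tendsto_nhdsWithin_iff.2 ⟨ha0, (eventually_gt_atTop 0).mono ha_pos⟩) hva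
    (Lam_sub_quadratic_isLittleO hcond.Delta_diff hDelta'')
    (fun θ hθ ↦ isBigO_one_of_exists_abs_le <|
      hH1 _ (fun t _ ↦ Real.exp_pos (θ t)) (by simpa using hθ.rexp))
    (isBigO_sqrt_of_normalized hcond.eventually_v_pos (isBigO_one_of_exists_abs_le hH2)
      (isBigO_one_of_exists_abs_le hH3))
  exact ⟨h.lowerSemicontinuous, fun η _ ↦ h.isCompact_sublevel η, h.limsup_le, h.le_liminf⟩
end
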